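/- arXiv:1111.5648 — 3 statements merged into one kernel-verified Lean document; each statement's English description precedes it below -/
import Mathlib

section
/- With probability at least 1 − δ over the i.i.d. draw of the sample D = (x_1,…,x_l) from P, every f ∈ F satisfies R(f) ≤ R(f,D,L) + c₁·√(V(F,D)/l) + c₂·√((1 − log₂ δ)/l), where L = (σ*(x_1),…,σ*(x_l)), c₁ = √(6/log₂ e) = √(6·ln 2) and c₂ = √(1/log₂ e) = √(ln 2). -/
open Classical Finset

/-- True risk of `f` as an approximation of the supervisor `σs`, with respect
to distribution `p` on `X`. -/
noncomputable def risk {X : Type*} [Fintype X] (p : X → ℝ) (σs f : X → Bool) : ℝ :=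
  ∑ x, (if f x ≠ σs x then (1 : ℝ) else 0) * p x

/-- Empirical risk of `f` on data `D` with labels `L`. -/
noncomputable def empRisk {X : Type*} {l : ℕ} (f : X → Bool)
    (D : Fin l → X) (L : Fin l → Bool) : ℝ :=
  (1 / l : ℝ) * ∑ i, if f (D i) ≠ L i then (1 : ℝ) else 0

/-- Empirical VC-entropy of `F` on `D`: `log₂` of the number of distinct
labelings of `D` realized by functions in `F`. -/
noncomputable def vcEntropy {X : Type*} {l : ℕ}
    (F : Finset (X → Bool)) (D : Fin l → X) : ℝ :=
  Real.logb 2 ((F.image (fun f => fun i => f (D i))).card)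

/-!
Consider the i.i.d. law of the sample restricted to the event that some loss overfits by more than
`√(6 log N / l) + ε`, where `N` is the number of traces. This weight is exchangeable, so the
maximizer `φ` of the overfitting on half of the sample overfits there by at least that much per
point, on average. Flipping the pairs formed by this half and a ghost half, Massart's lemma bounds
the average difference between the two halves by `√(6 log N / l)`. Hence `φ` still overfits by `ε`
per point on the held-out points, which are i.i.d. given the training half; Hoeffding's lemma and
Jensen's inequality for `exp` then bound the total weight by `exp (-l ε²)`.
-/

section WeightedSums

variable {Ω : Type*}

lemma sum_mul_le_of_sum_mul_exp_le {s : Finset Ω} {w Y : Ω → ℝ} {C : ℝ}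
    (hw : ∀ ω ∈ s, 0 ≤ w ω)
    (h : ∑ ω ∈ s, w ω * Real.exp (Y ω) ≤ (∑ ω ∈ s, w ω) * Real.exp C) :
    ∑ ω ∈ s, w ω * Y ω ≤ (∑ ω ∈ s, w ω) * C := by
  have tangent (ω : Ω) : (Y ω - C + 1) * Real.exp C ≤ Real.exp (Y ω) := by
    calc (Y ω - C + 1) * Real.exp C ≤ Real.exp (Y ω - C) * Real.exp C := by
          gcongr
          exact Real.add_one_le_exp _
      _ = Real.exp (Y ω) := by rw [← Real.exp_add, sub_add_cancel]
  have h_lin : (∑ ω ∈ s, w ω * (Y ω - C + 1)) * Real.exp C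
      ≤ (∑ ω ∈ s, w ω) * Real.exp C := by
    refine le_trans ?_ h
    rw [sum_mul]
    refine sum_le_sum fun ω hω => ?_
    rw [mul_assoc]
    exact mul_le_mul_of_nonneg_left (tangent ω) (hw ω hω)
  have h_sum := le_of_mul_le_mul_right h_lin (Real.exp_pos C)
  simp only [mul_add, mul_sub, mul_one, sum_add_distrib, sum_sub_distrib, ← sum_mul] at h_sum
  linarith

lemma le_sqrt_of_forall_mul_le {x a b : ℝ} (h : ∀ θ : ℝ, θ * x ≤ a + b * (θ ^ 2 / 2)) :
    x ≤ √(2 * b * a) := by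
  have h_discrim : discrim (b / 2) (-x) a ≤ 0 := discrim_le_zero fun θ => by linarith [h θ]
  rw [discrim] at h_discrim
  exact Real.le_sqrt_of_sq_le (by linarith)

variable [Fintype Ω]

lemma sum_mul_exp_le_of_mem_Icc_of_sum_mul_eq_zero {p g : Ω → ℝ} {a b : ℝ} (hp : ∀ x, 0 ≤ p x)
    (hp1 : ∑ x, p x = 1) (hg : ∀ x, g x ∈ Set.Icc a b) (hg0 : ∑ x, p x * g x = 0)
    (t : ℝ) :
    ∑ x, p x * Real.exp (t * g x) ≤ Real.exp ((b - a) ^ 2 * t ^ 2 / 8) := by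
  let _ : MeasurableSpace Ω := ⊤
  have h_mass : ∑ x, ENNReal.ofReal (p x) = 1 := by
    rw [← ENNReal.ofReal_sum_of_nonneg fun x _ => hp x, hp1, ENNReal.ofReal_one]
  let P : MeasureTheory.Measure Ω :=
    (PMF.ofFintype (fun x => ENNReal.ofReal (p x)) h_mass).toMeasure
  have integral_eq (h : Ω → ℝ) : ∫ x, h x ∂P = ∑ x, p x * h x := by
    simp [P, PMF.integral_eq_sum, ENNReal.toReal_ofReal (hp _)]
  have h_mgf := (ProbabilityTheory.hasSubgaussianMGF_of_mem_Icc_of_integral_eq_zero (μ := P)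
    measurable_from_top.aemeasurable (Filter.Eventually.of_forall hg)
    ((integral_eq g).trans hg0)).mgf_le t
  rw [ProbabilityTheory.mgf, integral_eq] at h_mgf
  refine h_mgf.trans_eq (congrArg Real.exp ?_)
  simp only [NNReal.coe_pow, NNReal.coe_div, coe_nnnorm, NNReal.coe_ofNat, div_pow,
    Real.norm_eq_abs, sq_abs]
  ring

end WeightedSums

section Massart

variable {κ : Type*} [Fintype κ] [DecidableEq κ]

/-- The Rademacher sum `∑ₖ ±aₖ`, where `τ k = true` stands for the sign `-1`. -/
noncomputable def signedSum (τ : κ → Bool) (a : κ → ℝ) : ℝ :=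
  ∑ k, (if τ k then -1 else 1) * a k

lemma sum_exp_signedSum_le (a : κ → ℝ) (θ : ℝ) :
    ∑ τ : κ → Bool, Real.exp (θ * signedSum τ a)
      ≤ 2 ^ Fintype.card κ * Real.exp ((∑ k, a k ^ 2) * (θ ^ 2 / 2)) := by
  calc ∑ τ : κ → Bool, Real.exp (θ * signedSum τ a)
      = ∏ k, ∑ b : Bool, Real.exp (θ * ((if b then -1 else 1) * a k)) := by
        simp only [signedSum, mul_sum, Real.exp_sum, Fintype.prod_sum]
    _ = ∏ k, 2 * Real.cosh (θ * a k) := by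
        refine prod_congr rfl fun k _ => ?_
        simp only [Fintype.sum_bool, if_true, Bool.false_eq_true, if_false, Real.cosh_eq]
        ring_nf
    _ ≤ ∏ k, 2 * Real.exp ((θ * a k) ^ 2 / 2) := by
        gcongr
        exact Real.cosh_le_exp_half_sq _
    _ = 2 ^ Fintype.card κ * Real.exp ((∑ k, a k ^ 2) * (θ ^ 2 / 2)) := by
        rw [prod_mul_distrib, prod_const, card_univ, ← Real.exp_sum, sum_mul]
        congr! 3
        ring

/-- Massart's finite class lemma: bound the maximum of the exponentials by their sum. -/
lemma sum_signedSum_le {A : Finset (κ → ℝ)} {R : ℝ} (hA : ∀ a ∈ A, ∑ k, a k ^ 2 ≤ R)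
    {m : (κ → Bool) → κ → ℝ} (hm : ∀ τ, m τ ∈ A) :
    ∑ τ, signedSum τ (m τ) ≤ 2 ^ Fintype.card κ * √(2 * R * Real.log #A) := by
  have hA_pos : (0 : ℝ) < #A := by exact_mod_cast card_pos.2 ⟨_, hm fun _ => true⟩
  have sum_exp_le (θ : ℝ) : ∑ τ, Real.exp (θ * signedSum τ (m τ))
      ≤ 2 ^ Fintype.card κ * Real.exp (Real.log #A + R * (θ ^ 2 / 2)) := by
    calc ∑ τ, Real.exp (θ * signedSum τ (m τ))
        ≤ ∑ τ, ∑ a ∈ A, Real.exp (θ * signedSum τ a) :=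
          sum_le_sum fun τ _ => single_le_sum (f := fun a => Real.exp (θ * signedSum τ a))
            (fun a _ => (Real.exp_pos _).le) (hm τ)
      _ = ∑ a ∈ A, ∑ τ, Real.exp (θ * signedSum τ a) := sum_comm
      _ ≤ ∑ a ∈ A, 2 ^ Fintype.card κ * Real.exp (R * (θ ^ 2 / 2)) := by
          refine sum_le_sum fun a ha => (sum_exp_signedSum_le a θ).trans ?_
          gcongr
          exact hA a ha
      _ = 2 ^ Fintype.card κ * Real.exp (Real.log #A + R * (θ ^ 2 / 2)) := by
          rw [sum_const, nsmul_eq_mul, Real.exp_add, Real.exp_log hA_pos]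
          ring
  have mean_le (θ : ℝ) :
      θ * ((∑ τ, signedSum τ (m τ)) / 2 ^ Fintype.card κ) ≤ Real.log #A + R * (θ ^ 2 / 2) := by
    have h_jensen := sum_mul_le_of_sum_mul_exp_le (s := univ) (w := fun _ => 1)
      (Y := fun τ => θ * signedSum τ (m τ)) (C := Real.log #A + R * (θ ^ 2 / 2))
      (fun _ _ => zero_le_one) (by simpa using sum_exp_le θ)
    rw [← mul_div_assoc, div_le_iff₀ (by positivity), mul_comm (_ + _)]
    simpa [← mul_sum] using h_jensen
  exact (div_le_iff₀' (by positivity)).1 (le_sqrt_of_forall_mul_le mean_le)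

end Massart

section Samples

variable {ι κ X α : Type*}

/-- A weight on samples is exchangeable if it does not depend on the order of the sample points.
Weights rather than laws are used so that an i.i.d. law restricted to an event is an instance. -/
def Exchangeable (w : (ι → X) → ℝ) : Prop :=
  ∀ (e : Equiv.Perm ι) (D : ι → X), w (D ∘ e) = w D

/-- The number of distinct traces `i ↦ g f (D i)` left on the sample `D` by the members `f` of `F`.
Its logarithm is the empirical entropy. -/
noncomputable def traceCard {β : Type*} (g : α → X → β) (F : Finset α) (D : ι → X) : ℕ :=
  #(F.image fun f i => g f (D i))

lemma traceCard_pos {β : Type*} (g : α → X → β) {F : Finset α} (hF : F.Nonempty) (D : ι → X) :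
    0 < traceCard g F D :=
  card_pos.2 (hF.image _)

lemma card_image_le_traceCard {β γ : Type*} [DecidableEq γ] (g : α → X → β) (F : Finset α)
    (D : ι → X) (r : (ι → β) → γ) : #(F.image fun f => r fun i => g f (D i)) ≤ traceCard g F D := by
  rw [← Function.comp_def r, ← image_image]
  exact card_image_le

lemma traceCard_comp_perm {β : Type*} (g : α → X → β) (F : Finset α) (D : ι → X)
    (e : Equiv.Perm ι) : traceCard g F (D ∘ e) = traceCard g F D := by
  refine le_antisymm (card_image_le_traceCard g F D (· ∘ e)) ?_
  simpa [traceCard, Function.comp_def] using card_image_le_traceCard g F (D ∘ e) (· ∘ e.symm)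

lemma eq_of_traceCard_le_one {β : Type*} {g : α → X → β} {F : Finset α} {D : ι → X}
    (h : traceCard g F D ≤ 1) {f f' : α} (hf : f ∈ F) (hf' : f' ∈ F) (i : ι) :
    g f (D i) = g f' (D i) :=
  congrFun (card_le_one.1 h _ (mem_image_of_mem _ hf) _ (mem_image_of_mem _ hf')) i

/-- A maximizer of `v` on `F`. -/
noncomputable def argmaxOn (F : Finset α) (hF : F.Nonempty) (v : α → ℝ) : α :=
  (F.exists_max_image v hF).choose

/-- The member of `F` whose total score on the subsample of `D` indexed by `S` is largest. It is
chosen as a function of these totals only, hence is unaffected by reordering that subsample. -/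
noncomputable def maximizer (g : α → X → ℝ) (F : Finset α) (hF : F.Nonempty) (S : Finset ι)
    (D : ι → X) : α :=
  argmaxOn F hF fun f => ∑ i ∈ S, g f (D i)

section Maximizer

variable {g : α → X → ℝ} {F : Finset α} (hF : F.Nonempty) (S : Finset ι) (D : ι → X)

lemma argmaxOn_mem (v : α → ℝ) : argmaxOn F hF v ∈ F :=
  (F.exists_max_image v hF).choose_spec.1

lemma le_argmaxOn (v : α → ℝ) {f : α} (hf : f ∈ F) : v f ≤ v (argmaxOn F hF v) :=
  (F.exists_max_image v hF).choose_spec.2 f hf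

lemma sum_le_sum_maximizer {f : α} (hf : f ∈ F) :
    ∑ i ∈ S, g f (D i) ≤ ∑ i ∈ S, g (maximizer g F hF S D) (D i) :=
  le_argmaxOn hF (fun f => ∑ i ∈ S, g f (D i)) hf

lemma dependsOn_maximizer : DependsOn (maximizer g F hF S) (S : Set ι) := by
  intro D D' h
  refine congrArg (argmaxOn F hF) (funext fun f => sum_congr rfl fun i hi => ?_)
  rw [h i hi]

lemma maximizer_comp_perm {e : Equiv.Perm ι} (he : ∀ i, i ∈ S ↔ e i ∈ S) :
    maximizer g F hF S (D ∘ e) = maximizer g F hF S D :=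
  congrArg (argmaxOn F hF) <| funext fun _ => sum_equiv e he fun _ _ => rfl

end Maximizer

section Pairs

variable [Fintype κ]

/-- For pairs of sample points `(e (k, false), e (k, true))`, the amounts by which the second point
of each pair scores more than the first. -/
def pairDiff (e : κ × Bool ↪ ι) (h : X → ℝ) (D : ι → X) (k : κ) : ℝ :=
  h (D (e (k, true))) - h (D (e (k, false)))

/-- The permutation that exchanges the two elements of the `k`-th pair whenever `τ k = true`. -/
def pairFlip (τ : κ → Bool) : Equiv.Perm (κ × Bool) :=
  Equiv.prodCongrRight fun k => if τ k then Equiv.boolNot else Equiv.refl Bool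

/-- The first (`b = false`) or second (`b = true`) elements of all the pairs. -/
def pairBlock (e : κ × Bool ↪ ι) (b : Bool) : Finset ι :=
  univ.map ((Function.Embedding.sectL κ b).trans e)

lemma card_pairBlock (e : κ × Bool ↪ ι) (b : Bool) : #(pairBlock e b) = Fintype.card κ :=
  card_map _

lemma sum_pairBlock (e : κ × Bool ↪ ι) (b : Bool) (v : ι → ℝ) :
    ∑ i ∈ pairBlock e b, v i = ∑ k, v (e (k, b)) :=
  sum_map _ _ _

lemma disjoint_pairBlock (e : κ × Bool ↪ ι) : Disjoint (pairBlock e true) (pairBlock e false) := by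
  simp [disjoint_left, pairBlock]

lemma sum_pairDiff_comp_pairFlip (e : κ × Bool ↪ ι) (h : X → ℝ) (D : ι → X) (τ : κ → Bool) :
    ∑ k, pairDiff e h (D ∘ (pairFlip τ).viaEmbedding e) k = signedSum τ (pairDiff e h D) := by
  refine sum_congr rfl fun k _ => ?_
  simp only [pairDiff, Function.comp_apply, Equiv.Perm.viaEmbedding_apply, pairFlip,
    Equiv.prodCongrRight_apply]
  cases τ k <;> simp

lemma sum_signedSum_pairDiff_le [DecidableEq κ] {g : α → X → ℝ} {F : Finset α}
    (hg : ∀ f x y, |g f x - g f y| ≤ 1) {m : (κ → Bool) → α}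
    (hm : ∀ τ, m τ ∈ F) (e : κ × Bool ↪ ι) (D : ι → X) :
    ∑ τ, signedSum τ (pairDiff e (g (m τ)) D)
      ≤ 2 ^ Fintype.card κ * √(2 * Fintype.card κ * Real.log (traceCard g F D)) := by
  have sum_sq_le : ∀ a ∈ F.image fun f => pairDiff e (g f) D, ∑ k, a k ^ 2 ≤ Fintype.card κ := by
    simp only [forall_mem_image]
    intro f _
    calc ∑ k, pairDiff e (g f) D k ^ 2 ≤ ∑ _k : κ, (1 : ℝ) :=
          sum_le_sum fun k _ => (sq_le_one_iff_abs_le_one _).2 (hg f _ _)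
      _ = Fintype.card κ := by simp
  refine (sum_signedSum_le sum_sq_le fun τ => mem_image_of_mem _ (hm τ)).trans ?_
  gcongr
  · exact_mod_cast card_pos.2 ⟨_, mem_image_of_mem _ (hm fun _ => true)⟩
  · exact card_image_le_traceCard g F D fun v k => v (e (k, true)) - v (e (k, false))

end Pairs

variable [Fintype ι] [DecidableEq ι] [Fintype X] {w : (ι → X) → ℝ}

lemma Exchangeable.sum_mul_comp_perm (hw : Exchangeable w) (h : (ι → X) → ℝ)
    (e : Equiv.Perm ι) : ∑ D, w D * h (D ∘ e) = ∑ D, w D * h D :=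
  Fintype.sum_equiv (e.symm.arrowCongr (Equiv.refl X)) _ _ fun D =>
    congrArg (· * h (D ∘ e)) (hw e D).symm

lemma Exchangeable.sum_mul_maximizer_eq (hw : Exchangeable w) {g : α → X → ℝ} {F : Finset α}
    (hF : F.Nonempty) {S : Finset ι} {i j : ι} (hij : i ∈ S ↔ j ∈ S) :
    ∑ D, w D * g (maximizer g F hF S D) (D i) = ∑ D, w D * g (maximizer g F hF S D) (D j) := by
  rw [← hw.sum_mul_comp_perm _ (Equiv.swap i j)]
  have swap_mem (k : ι) : k ∈ S ↔ Equiv.swap i j k ∈ S := by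
    rw [Equiv.swap_apply_def]
    split_ifs with hi hj
    · rw [hi, hij]
    · rw [hj, hij]
    · rfl
  simp only [maximizer_comp_perm hF S _ swap_mem, Function.comp_apply, Equiv.swap_apply_left]

lemma Exchangeable.card_mul_sum_maximizer_comm (hw : Exchangeable w) {g : α → X → ℝ}
    {F : Finset α} (hF : F.Nonempty) {S T U : Finset ι}
    (hTU : ∀ i ∈ T, ∀ j ∈ U, (i ∈ S ↔ j ∈ S)) :
    #T * ∑ D, w D * ∑ j ∈ U, g (maximizer g F hF S D) (D j)
      = #U * ∑ D, w D * ∑ i ∈ T, g (maximizer g F hF S D) (D i) := by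
  simp only [mul_sum (s := U), mul_sum (s := T)]
  rw [sum_comm, sum_comm (t := T), ← nsmul_eq_mul, ← nsmul_eq_mul, ← sum_const, ← sum_const,
    sum_comm]
  exact sum_congr rfl fun j hj => sum_congr rfl fun i hi =>
    (hw.sum_mul_maximizer_eq hF (hTU i hi j hj)).symm

/-- Symmetrization: averaging over all the pair flips turns the differences into Rademacher sums
over the traces of `F`, although `φ` itself changes with the flip. -/
lemma Exchangeable.sum_mul_pairDiff_le [Fintype κ] (hw : Exchangeable w) (hw0 : ∀ D, 0 ≤ w D)
    {g : α → X → ℝ} {F : Finset α} (hg : ∀ f x y, |g f x - g f y| ≤ 1) {φ : (ι → X) → α}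
    (hφ : ∀ D, φ D ∈ F) (e : κ × Bool ↪ ι) :
    ∑ D, w D * ∑ k, pairDiff e (g (φ D)) D k
      ≤ ∑ D, w D * √(2 * Fintype.card κ * Real.log (traceCard g F D)) := by
  let H (D : ι → X) : ℝ := ∑ k, pairDiff e (g (φ D)) D k
  let flip (τ : κ → Bool) : Equiv.Perm ι := (pairFlip τ).viaEmbedding e
  refine le_of_mul_le_mul_left (a := (2 : ℝ) ^ Fintype.card κ) ?_ (by positivity)
  calc 2 ^ Fintype.card κ * ∑ D, w D * H D
      = ∑ τ : κ → Bool, ∑ D, w D * H (D ∘ flip τ) := by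
        simp [hw.sum_mul_comp_perm H]
    _ = ∑ D, w D * ∑ τ : κ → Bool, signedSum τ (pairDiff e (g (φ (D ∘ flip τ))) D) := by
        rw [sum_comm]
        simp only [H, flip, sum_pairDiff_comp_pairFlip, mul_sum]
    _ ≤ ∑ D, w D * (2 ^ Fintype.card κ
          * √(2 * Fintype.card κ * Real.log (traceCard g F D))) := by
        gcongr with D
        · exact hw0 D
        · exact sum_signedSum_pairDiff_le hg (fun τ => hφ _) e D
    _ = 2 ^ Fintype.card κ * ∑ D, w D * √(2 * Fintype.card κ * Real.log (traceCard g F D)) := by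
        simp only [mul_sum, mul_left_comm]

lemma Exchangeable.card_mul_sum_le_sum_maximizer [Nonempty ι] (hw : Exchangeable w)
    (hw0 : ∀ D, 0 ≤ w D) {g : α → X → ℝ} {F : Finset α} (hF : F.Nonempty) {r : (ι → X) → ℝ}
    (hr : ∀ D, w D ≠ 0 → ∃ f ∈ F, Fintype.card ι * r D ≤ ∑ i, g f (D i)) (S : Finset ι) :
    #S * ∑ D, w D * r D ≤ ∑ D, w D * ∑ i ∈ S, g (maximizer g F hF S D) (D i) := by
  have full_sample : Fintype.card ι * ∑ D, w D * r D
      ≤ ∑ D, w D * ∑ i, g (maximizer g F hF univ D) (D i) := by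
    rw [mul_sum]
    refine sum_le_sum fun D _ => ?_
    rw [mul_left_comm]
    by_cases hD : w D = 0
    · simp [hD]
    obtain ⟨f, hf, hfD⟩ := hr D hD
    exact mul_le_mul_of_nonneg_left (hfD.trans (sum_le_sum_maximizer hF univ D hf)) (hw0 D)
  have subsample : ∑ D, w D * ∑ i ∈ S, g (maximizer g F hF univ D) (D i)
      ≤ ∑ D, w D * ∑ i ∈ S, g (maximizer g F hF S D) (D i) :=
    sum_le_sum fun D _ => mul_le_mul_of_nonneg_left
      (sum_le_sum_maximizer hF S D (argmaxOn_mem hF _)) (hw0 D)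
  have exchange := hw.card_mul_sum_maximizer_comm (g := g) hF (S := univ) (T := S) (U := univ)
    (by simp)
  have hι : (0 : ℝ) < Fintype.card ι := by exact_mod_cast Fintype.card_pos
  refine le_of_mul_le_mul_left ?_ hι
  calc Fintype.card ι * (#S * ∑ D, w D * r D) = #S * (Fintype.card ι * ∑ D, w D * r D) := by ring
    _ ≤ #S * ∑ D, w D * ∑ i, g (maximizer g F hF univ D) (D i) := by gcongr
    _ = Fintype.card ι * ∑ D, w D * ∑ i ∈ S, g (maximizer g F hF univ D) (D i) := by
        rw [exchange, card_univ]
    _ ≤ Fintype.card ι * ∑ D, w D * ∑ i ∈ S, g (maximizer g F hF S D) (D i) := by gcongr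

/-- Conditionally on the points in `S`, the value of `φ` is fixed and the remaining points are still
independent. -/
lemma sum_prod_mul_prod_compl_le {p : X → ℝ} (hp : ∀ x, 0 ≤ p x) (hp1 : ∑ x, p x = 1)
    {u : α → X → ℝ} (hu : ∀ f x, 0 ≤ u f x) {K : ℝ} (hK : ∀ f, ∑ x, p x * u f x ≤ K)
    {S : Finset ι} {φ : (ι → X) → α} (hφ : DependsOn φ (S : Set ι)) :
    ∑ D : ι → X, (∏ i, p (D i)) * ∏ j ∈ Sᶜ, u (φ D) (D j) ≤ K ^ #Sᶜ := by
  obtain ⟨x₀⟩ : Nonempty X := by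
    by_contra h
    simp [not_nonempty_iff.1 h] at hp1
  let split := Equiv.piEquivPiSubtypeProd (· ∈ S) fun _ : ι => X
  let φS (a : S → X) : α := φ (split.symm (a, fun _ => x₀))
  have φ_split (a : S → X) (b : {i // i ∉ S} → X) : φ (split.symm (a, b)) = φS a :=
    hφ fun i hi => by simp [split, mem_coe.1 hi]
  have prod_split (a : S → X) (b : {i // i ∉ S} → X) :
      (∏ i, p (split.symm (a, b) i)) * ∏ j ∈ Sᶜ, u (φS a) (split.symm (a, b) j)
        = (∏ i, p (a i)) * ∏ j, p (b j) * u (φS a) (b j) := by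
    have inside (i : S) : split.symm (a, b) i = a i := by simp [split]
    have outside (j : {i // i ∉ S}) : split.symm (a, b) j = b j := by simp [split, j.2]
    rw [← Fintype.prod_subtype_mul_prod_subtype (· ∈ S), prod_subtype Sᶜ fun _ => mem_compl,
      mul_assoc, ← prod_mul_distrib]
    simp only [inside, outside]
    congr!
  calc ∑ D : ι → X, (∏ i, p (D i)) * ∏ j ∈ Sᶜ, u (φ D) (D j)
      = ∑ a : S → X, (∏ i, p (a i)) * ∏ _j : {i // i ∉ S}, ∑ x, p x * u (φS a) x := by
        rw [← split.symm.sum_comp, Fintype.sum_prod_type]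
        simp only [φ_split, prod_split, Fintype.prod_sum, mul_sum]
    _ ≤ ∑ a : S → X, (∏ i, p (a i)) * ∏ _j : {i // i ∉ S}, K := by
        gcongr with a _ j
        · exact prod_nonneg fun i _ => hp _
        · exact fun _ _ => sum_nonneg fun x _ => mul_nonneg (hp x) (hu _ x)
        · exact hK _
    _ = K ^ #Sᶜ := by
        rw [← sum_mul, ← Fintype.prod_sum fun _ x => p x]
        simp [hp1, card_compl]

/-- The amount by which the mean of `h` under the weights `p` exceeds the value `h x`. -/
noncomputable def deficit (p h : X → ℝ) (x : X) : ℝ :=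
  ∑ y, p y * h y - h x

/-- The penalty `√(6 log N / l)`, where `N` is the number of traces on a sample of size `l`. -/
noncomputable def entropyRadius (ℓ : α → X → ℝ) (F : Finset α) (D : ι → X) : ℝ :=
  √(6 * Real.log (traceCard ℓ F D) / Fintype.card ι)

/-- The failure event: some loss `ℓ f` with `f ∈ F` has an empirical mean on `D` that is smaller
than its true mean by more than the entropy penalty plus `ε`. -/
def Overfits (p : X → ℝ) (ℓ : α → X → ℝ) (F : Finset α) (ε : ℝ) (D : ι → X) : Prop :=
  ∃ f ∈ F, (∑ i, ℓ f (D i)) / Fintype.card ι + entropyRadius ℓ F D + ε < ∑ x, p x * ℓ f x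

/-- The i.i.d. law of the sample, restricted to the failure event. -/
noncomputable def overfitWeight (p : X → ℝ) (ℓ : α → X → ℝ) (F : Finset α) (ε : ℝ)
    (D : ι → X) : ℝ :=
  if Overfits p ℓ F ε D then ∏ i, p (D i) else 0

variable {p : X → ℝ} {ℓ : α → X → ℝ} {F : Finset α} {ε : ℝ}

omit [DecidableEq ι] in
lemma Overfits.exists_le_sum_deficit [Nonempty ι] {D : ι → X} (h : Overfits p ℓ F ε D) :
    ∃ f ∈ F, Fintype.card ι * (entropyRadius ℓ F D + ε) ≤ ∑ i, deficit p (ℓ f) (D i) := by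
  obtain ⟨f, hf, hlt⟩ := h
  refine ⟨f, hf, ?_⟩
  have h_mean : ∑ i, deficit p (ℓ f) (D i)
      = Fintype.card ι * (∑ x, p x * ℓ f x - (∑ i, ℓ f (D i)) / Fintype.card ι) := by
    simp only [deficit, sum_sub_distrib, sum_const, card_univ, nsmul_eq_mul]
    field_simp
  rw [h_mean]
  gcongr
  linarith

omit [DecidableEq ι] in
lemma overfits_comp_perm (e : Equiv.Perm ι) (D : ι → X) :
    Overfits p ℓ F ε (D ∘ e) ↔ Overfits p ℓ F ε D := by
  have sum_comp (f : α) : ∑ i, ℓ f (D (e i)) = ∑ i, ℓ f (D i) :=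
    Equiv.sum_comp e fun i => ℓ f (D i)
  simp only [Overfits, entropyRadius, traceCard_comp_perm, Function.comp_apply, sum_comp]

omit [DecidableEq ι] in
lemma exchangeable_overfitWeight : Exchangeable (overfitWeight p ℓ F ε : (ι → X) → ℝ) := by
  intro e D
  simp only [overfitWeight, overfits_comp_perm, Function.comp_apply,
    Equiv.prod_comp e fun i => p (D i)]

omit [DecidableEq ι] in
lemma overfitWeight_nonneg (hp : ∀ x, 0 ≤ p x) (D : ι → X) : 0 ≤ overfitWeight p ℓ F ε D :=
  ite_nonneg (prod_nonneg fun _ _ => hp _) le_rfl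

omit [DecidableEq ι] in
lemma overfitWeight_le (hp : ∀ x, 0 ≤ p x) (D : ι → X) :
    overfitWeight p ℓ F ε D ≤ ∏ i, p (D i) :=
  ite_le_sup _ _ _ |>.trans (sup_le le_rfl (prod_nonneg fun _ _ => hp _))

lemma sum_mul_exp_mul_deficit_le (hp : ∀ x, 0 ≤ p x) (hp1 : ∑ x, p x = 1) {h : X → ℝ}
    (hh : ∀ x, h x ∈ Set.Icc 0 1) (t : ℝ) :
    ∑ x, p x * Real.exp (t * deficit p h x) ≤ Real.exp (t ^ 2 / 8) := by
  have mem_Icc (x : X) : deficit p h x ∈ Set.Icc (∑ y, p y * h y - 1) (∑ y, p y * h y) := by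
    constructor <;> simp only [deficit] <;> linarith [(hh x).1, (hh x).2]
  have mean_zero : ∑ x, p x * deficit p h x = 0 := by
    simp only [deficit, mul_sub, sum_sub_distrib, ← sum_mul, hp1, one_mul, sub_self]
  simpa using sum_mul_exp_le_of_mem_Icc_of_sum_mul_eq_zero hp hp1 mem_Icc mean_zero t

lemma sum_le_exp_of_le_sum_heldOut (hp : ∀ x, 0 ≤ p x) (hp1 : ∑ x, p x = 1)
    (hℓ : ∀ f x, ℓ f x ∈ Set.Icc 0 1) (hw0 : ∀ D, 0 ≤ w D) (hwp : ∀ D, w D ≤ ∏ i, p (D i))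
    {S : Finset ι} {φ : (ι → X) → α} (hφ : DependsOn φ (S : Set ι)) (hε : 0 ≤ ε)
    (h : #Sᶜ * ((∑ D, w D) * ε) ≤ ∑ D, w D * ∑ j ∈ Sᶜ, deficit p (ℓ (φ D)) (D j)) :
    ∑ D, w D ≤ Real.exp (-(2 * #Sᶜ * ε ^ 2)) := by
  set β := ∑ D, w D
  obtain hβ | hβ := le_or_gt β 0
  · exact hβ.trans (Real.exp_pos _).le
  -- `4 * ε` minimizes the exponent `t ^ 2 / 8 - t * ε` of the Chernoff bound
  have mgf_le : ∑ D, w D * Real.exp (4 * ε * ∑ j ∈ Sᶜ, deficit p (ℓ (φ D)) (D j))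
      ≤ β * Real.exp (2 * #Sᶜ * ε ^ 2 - Real.log β) := by
    calc ∑ D, w D * Real.exp (4 * ε * ∑ j ∈ Sᶜ, deficit p (ℓ (φ D)) (D j))
        ≤ ∑ D : ι → X, (∏ i, p (D i)) *
            ∏ j ∈ Sᶜ, Real.exp (4 * ε * deficit p (ℓ (φ D)) (D j)) := by
          refine sum_le_sum fun D _ => ?_
          rw [mul_sum, Real.exp_sum]
          gcongr
          exact hwp D
      _ ≤ Real.exp ((4 * ε) ^ 2 / 8) ^ #Sᶜ :=
          sum_prod_mul_prod_compl_le hp hp1 (u := fun f x => Real.exp (4 * ε * deficit p (ℓ f) x))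
            (fun _ _ => (Real.exp_pos _).le)
            (fun f => sum_mul_exp_mul_deficit_le hp hp1 (hℓ f) _) hφ
      _ = β * Real.exp (2 * #Sᶜ * ε ^ 2 - Real.log β) := by
          rw [Real.exp_sub, Real.exp_log hβ, mul_div_cancel₀ _ hβ.ne', ← Real.exp_nat_mul]
          ring_nf
  have mean_le := sum_mul_le_of_sum_mul_exp_le (fun D _ => hw0 D) mgf_le
  have log_le : Real.log β ≤ -(2 * #Sᶜ * ε ^ 2) := by
    refine le_of_mul_le_mul_left ?_ hβ
    simp only [mul_left_comm _ (4 * ε), ← mul_sum] at mean_le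
    linarith [mul_le_mul_of_nonneg_left h (show 0 ≤ 4 * ε by positivity)]
  rwa [← Real.log_le_iff_le_exp hβ]

omit [Fintype ι] [DecidableEq ι] in
lemma sum_pairDiff_eq_sub_sum_deficit [Fintype κ] (p h : X → ℝ) (e : κ × Bool ↪ ι) (D : ι → X) :
    ∑ k, pairDiff e h D k
      = ∑ i ∈ pairBlock e false, deficit p h (D i) - ∑ i ∈ pairBlock e true, deficit p h (D i) := by
  simp only [sum_pairBlock, ← sum_sub_distrib, pairDiff, deficit, sub_sub_sub_cancel_left]

omit [DecidableEq ι] [Fintype X] in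
/-- The constant `6` in `entropyRadius` is the `2` of Massart's lemma times the ratio `3`, attained
by three sample points and a single pair. -/
lemma sqrt_le_card_mul_entropyRadius [Nonempty ι] [Fintype κ]
    (hκ : Fintype.card ι ≤ 3 * Fintype.card κ) (D : ι → X) :
    √(2 * Fintype.card κ * Real.log (traceCard ℓ F D))
      ≤ Fintype.card κ * entropyRadius ℓ F D := by
  have hκ' : (Fintype.card ι : ℝ) ≤ 3 * Fintype.card κ := by exact_mod_cast hκ
  have hι : (0 : ℝ) < Fintype.card ι := by exact_mod_cast Fintype.card_pos
  rw [entropyRadius]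
  refine Real.sqrt_le_iff.2 ⟨by positivity, ?_⟩
  rw [mul_pow, Real.sq_sqrt (by positivity), mul_div_assoc', le_div_iff₀ hι]
  calc 2 * Fintype.card κ * Real.log (traceCard ℓ F D) * Fintype.card ι
      ≤ 2 * Fintype.card κ * Real.log (traceCard ℓ F D) * (3 * Fintype.card κ) := by gcongr
    _ = Fintype.card κ ^ 2 * (6 * Real.log (traceCard ℓ F D)) := by ring

lemma card_mul_sum_overfitWeight_le_sum_pairBlock [Nonempty ι] [Fintype κ] (hp : ∀ x, 0 ≤ p x)
    (hℓ : ∀ f x, ℓ f x ∈ Set.Icc 0 1) (hF : F.Nonempty) (e : κ × Bool ↪ ι)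
    (he : Fintype.card ι ≤ 3 * Fintype.card κ) :
    Fintype.card κ * ((∑ D : ι → X, overfitWeight p ℓ F ε D) * ε)
      ≤ ∑ D : ι → X, overfitWeight p ℓ F ε D * ∑ i ∈ pairBlock e true,
        deficit p (ℓ (maximizer (fun f => deficit p (ℓ f)) F hF (pairBlock e false) D)) (D i) := by
  let w : (ι → X) → ℝ := overfitWeight p ℓ F ε
  let φ : (ι → X) → α := maximizer (fun f => deficit p (ℓ f)) F hF (pairBlock e false)
  let total (b : Bool) : ℝ := ∑ D, w D * ∑ i ∈ pairBlock e b, deficit p (ℓ (φ D)) (D i)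
  have hw : Exchangeable w := exchangeable_overfitWeight
  have hw0 : ∀ D, 0 ≤ w D := overfitWeight_nonneg hp
  have training : Fintype.card κ * ∑ D, w D * (entropyRadius ℓ F D + ε) ≤ total false := by
    rw [← card_pairBlock e false]
    exact hw.card_mul_sum_le_sum_maximizer hw0 (g := fun f => deficit p (ℓ f)) hF
      (r := fun D => entropyRadius ℓ F D + ε)
      (fun D hD => Overfits.exists_le_sum_deficit (ite_ne_right_iff.1 hD).1) _
  have symmetrization : total false - total true
      ≤ ∑ D, w D * √(2 * Fintype.card κ * Real.log (traceCard ℓ F D)) := by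
    have h := hw.sum_mul_pairDiff_le hw0 (g := ℓ) (F := F) (φ := φ)
      (fun f x y => abs_sub_le_of_nonneg_of_le (hℓ f x).1 (hℓ f x).2 (hℓ f y).1 (hℓ f y).2)
      (fun D => argmaxOn_mem hF _) e
    simpa only [sum_pairDiff_eq_sub_sum_deficit p, mul_sub, sum_sub_distrib] using h
  have radius : ∑ D, w D * √(2 * Fintype.card κ * Real.log (traceCard ℓ F D))
      ≤ Fintype.card κ * ∑ D, w D * entropyRadius ℓ F D := by
    rw [mul_sum]
    refine sum_le_sum fun D _ => ?_
    rw [mul_left_comm]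
    exact mul_le_mul_of_nonneg_left (sqrt_le_card_mul_entropyRadius he D) (hw0 D)
  simp only [mul_add, sum_add_distrib, ← sum_mul] at training
  exact (by linarith : Fintype.card κ * ((∑ D, w D) * ε) ≤ total true)

lemma card_mul_sum_overfitWeight_le_sum_compl [Nonempty ι] [Fintype κ] [Nonempty κ]
    (hp : ∀ x, 0 ≤ p x) (hℓ : ∀ f x, ℓ f x ∈ Set.Icc 0 1) (hF : F.Nonempty) (e : κ × Bool ↪ ι)
    (he : Fintype.card ι ≤ 3 * Fintype.card κ) :
    #(pairBlock e false)ᶜ * ((∑ D : ι → X, overfitWeight p ℓ F ε D) * ε)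
      ≤ ∑ D : ι → X, overfitWeight p ℓ F ε D * ∑ i ∈ (pairBlock e false)ᶜ,
        deficit p (ℓ (maximizer (fun f => deficit p (ℓ f)) F hF (pairBlock e false) D)) (D i) := by
  have hκ : (0 : ℝ) < Fintype.card κ := by exact_mod_cast Fintype.card_pos
  have exchange := (exchangeable_overfitWeight (p := p) (ℓ := ℓ) (F := F) (ε := ε)
    ).card_mul_sum_maximizer_comm (g := fun f => deficit p (ℓ f)) hF (S := pairBlock e false)
    (T := pairBlock e true) (U := (pairBlock e false)ᶜ) fun i hi j hj =>
      iff_of_false (disjoint_left.1 (disjoint_pairBlock e) hi) (mem_compl.1 hj)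
  rw [card_pairBlock] at exchange
  refine le_of_mul_le_mul_left ?_ hκ
  rw [exchange, mul_left_comm]
  gcongr
  exact card_mul_sum_overfitWeight_le_sum_pairBlock hp hℓ hF e he

lemma sum_overfitWeight_le_exp_of_two_le (hp : ∀ x, 0 ≤ p x) (hp1 : ∑ x, p x = 1)
    (hℓ : ∀ f x, ℓ f x ∈ Set.Icc 0 1) (hF : F.Nonempty) (hε : 0 ≤ ε)
    (hι : 2 ≤ Fintype.card ι) :
    ∑ D : ι → X, overfitWeight p ℓ F ε D ≤ Real.exp (-(Fintype.card ι * ε ^ 2)) := by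
  let κ := Fin (Fintype.card ι / 2)
  have : Nonempty ι := Fintype.card_pos_iff.1 (by omega)
  have : Nonempty κ := ⟨0, by omega⟩
  obtain ⟨e⟩ : Nonempty (κ × Bool ↪ ι) := Function.Embedding.nonempty_of_card_le (by
    simp only [κ, Fintype.card_prod, Fintype.card_fin, Fintype.card_bool]
    omega)
  have card_heldOut : (Fintype.card ι : ℝ) ≤ 2 * #(pairBlock e false)ᶜ := by
    have h : Fintype.card ι ≤ 2 * #(pairBlock e false)ᶜ := by
      rw [card_compl, card_pairBlock, Fintype.card_fin]
      omega
    exact_mod_cast h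
  calc ∑ D : ι → X, overfitWeight p ℓ F ε D
      ≤ Real.exp (-(2 * #(pairBlock e false)ᶜ * ε ^ 2)) :=
        sum_le_exp_of_le_sum_heldOut hp hp1 hℓ (overfitWeight_nonneg hp) (overfitWeight_le hp)
          (dependsOn_maximizer hF _) hε
          (card_mul_sum_overfitWeight_le_sum_compl hp hℓ hF e (by
            rw [Fintype.card_fin]
            omega))
    _ ≤ Real.exp (-(Fintype.card ι * ε ^ 2)) := by gcongr

section Unique

variable [Unique ι]

omit [DecidableEq ι] in
lemma Overfits.le_deficit_argmaxOn (hp : ∀ x, 0 ≤ p x) (hp1 : ∑ x, p x = 1)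
    (hℓ : ∀ f x, ℓ f x ∈ Set.Icc 0 1) (hF : F.Nonempty) (hε : 0 ≤ ε) {D : ι → X}
    (h : Overfits p ℓ F ε D) :
    ε ≤ deficit p (ℓ (argmaxOn F hF fun f => ∑ x, p x * ℓ f x)) (D default) := by
  obtain ⟨f, hf, hlt⟩ := h
  simp only [Fintype.sum_unique, Fintype.card_unique, Nat.cast_one, div_one] at hlt
  set f₀ := argmaxOn F hF fun f => ∑ x, p x * ℓ f x
  have mean_le_one : ∑ x, p x * ℓ f x ≤ 1 := by
    rw [← hp1]
    exact sum_le_sum fun x _ => mul_le_of_le_one_right (hp x) (hℓ f x).2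
  have radius_lt : entropyRadius ℓ F D < 1 := by linarith [(hℓ f (D default)).1]
  have traceCard_le : traceCard ℓ F D ≤ 1 := by
    by_contra! h_two
    have h_log : Real.log 2 ≤ Real.log (traceCard ℓ F D) :=
      Real.log_le_log two_pos (by exact_mod_cast h_two)
    refine radius_lt.not_ge (Real.one_le_sqrt.2 ?_)
    rw [Fintype.card_unique, Nat.cast_one, div_one]
    linarith [Real.log_two_gt_d9]
  have loss_eq : ℓ f (D default) = ℓ f₀ (D default) :=
    eq_of_traceCard_le_one traceCard_le hf (argmaxOn_mem hF _) default
  have mean_le : ∑ x, p x * ℓ f x ≤ ∑ x, p x * ℓ f₀ x :=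
    le_argmaxOn hF (fun f => ∑ x, p x * ℓ f x) hf
  have radius_nonneg : 0 ≤ entropyRadius ℓ F D := Real.sqrt_nonneg _
  rw [deficit]
  linarith

/-- With a single sample point the entropy penalty exceeds `1` unless all losses agree on it, so the
member of `F` with the largest true mean witnesses every failure. -/
lemma sum_overfitWeight_le_exp_of_unique (hp : ∀ x, 0 ≤ p x) (hp1 : ∑ x, p x = 1)
    (hℓ : ∀ f x, ℓ f x ∈ Set.Icc 0 1) (hF : F.Nonempty) (hε : 0 ≤ ε) :
    ∑ D : ι → X, overfitWeight p ℓ F ε D ≤ Real.exp (-(2 * ε ^ 2)) := by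
  let f₀ := argmaxOn F hF fun f => ∑ x, p x * ℓ f x
  have le_deficit : (∑ D : ι → X, overfitWeight p ℓ F ε D) * ε
      ≤ ∑ D : ι → X, overfitWeight p ℓ F ε D * deficit p (ℓ f₀) (D default) := by
    rw [sum_mul]
    refine sum_le_sum fun D _ => ?_
    by_cases hD : Overfits p ℓ F ε D
    · exact mul_le_mul_of_nonneg_left (hD.le_deficit_argmaxOn hp hp1 hℓ hF hε)
        (overfitWeight_nonneg hp D)
    · simp [overfitWeight, hD]
  simpa using sum_le_exp_of_le_sum_heldOut hp hp1 hℓ (S := (∅ : Finset ι)) (φ := fun _ => f₀)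
    (overfitWeight_nonneg hp) (overfitWeight_le hp) (fun _ _ _ => rfl) hε
    (by simpa using le_deficit)

end Unique

lemma sum_overfitWeight_le_exp [Nonempty ι] (hp : ∀ x, 0 ≤ p x) (hp1 : ∑ x, p x = 1)
    (hℓ : ∀ f x, ℓ f x ∈ Set.Icc 0 1) (hε : 0 ≤ ε) :
    ∑ D : ι → X, overfitWeight p ℓ F ε D ≤ Real.exp (-(Fintype.card ι * ε ^ 2)) := by
  obtain rfl | hF := F.eq_empty_or_nonempty
  · simpa [overfitWeight, Overfits] using (Real.exp_pos _).le
  obtain hι | hι := (Nat.one_le_iff_ne_zero.2 (Fintype.card_ne_zero (α := ι))).eq_or_lt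
  · obtain ⟨_⟩ := Fintype.card_eq_one_iff_nonempty_unique.1 hι.symm
    refine (sum_overfitWeight_le_exp_of_unique hp hp1 hℓ hF hε).trans ?_
    rw [← hι, Nat.cast_one]
    gcongr
    norm_num
  · exact sum_overfitWeight_le_exp_of_two_le hp hp1 hℓ hF hε hι

theorem empirical_vc_entropy_bound_general [Nonempty ι] (hp : ∀ x, 0 ≤ p x)
    (hp1 : ∑ x, p x = 1) (hℓ : ∀ f x, ℓ f x ∈ Set.Icc 0 1) {δ : ℝ} (hδ0 : 0 < δ) (hδ1 : δ ≤ 1) :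
    1 - δ ≤ ∑ D : ι → X,
      if ∀ f ∈ F, ∑ x, p x * ℓ f x ≤ (∑ i, ℓ f (D i)) / Fintype.card ι
          + √(6 * Real.log (traceCard ℓ F D) / Fintype.card ι)
          + √(-Real.log δ / Fintype.card ι)
        then ∏ i, p (D i) else 0 := by
  have hι : (0 : ℝ) < Fintype.card ι := by exact_mod_cast Fintype.card_pos
  have log_nonpos : Real.log δ ≤ 0 := Real.log_nonpos hδ0.le hδ1
  set ε := √(-Real.log δ / Fintype.card ι)
  have failure_le : ∑ D : ι → X, overfitWeight p ℓ F ε D ≤ δ := by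
    refine (sum_overfitWeight_le_exp hp hp1 hℓ (Real.sqrt_nonneg _)).trans_eq ?_
    rw [Real.sq_sqrt (div_nonneg (neg_nonneg.2 log_nonpos) hι.le), mul_div_cancel₀ _ hι.ne',
      neg_neg, Real.exp_log hδ0]
  have total_mass : ∑ D : ι → X, ∏ i, p (D i) = 1 := by
    simp [← Fintype.prod_sum fun _ : ι => p, hp1]
  calc 1 - δ ≤ ∑ D : ι → X, (∏ i, p (D i) - overfitWeight p ℓ F ε D) := by
        rw [sum_sub_distrib, total_mass]
        linarith
    _ = _ := by
        refine sum_congr rfl fun D _ => ?_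
        simp only [overfitWeight, Overfits, entropyRadius, ← not_lt]
        split_ifs <;> simp_all

end Samples

section ZeroOneLoss

variable {X : Type*} {l : ℕ}

/-- The loss of the classifier `f` at the point `x`, for the supervisor `σs`: `1` for a
misclassification and `0` otherwise. -/
def zeroOneLoss (σs f : X → Bool) (x : X) : ℝ :=
  if f x ≠ σs x then 1 else 0

lemma zeroOneLoss_mem_Icc (σs f : X → Bool) (x : X) : zeroOneLoss σs f x ∈ Set.Icc 0 1 := by
  rw [zeroOneLoss]
  split_ifs <;> simp

lemma risk_eq_sum_mul_zeroOneLoss [Fintype X] (p : X → ℝ) (σs f : X → Bool) :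
    risk p σs f = ∑ x, p x * zeroOneLoss σs f x :=
  sum_congr rfl fun _ _ => mul_comm _ _

lemma empRisk_eq_sum_zeroOneLoss_div (σs f : X → Bool) (D : Fin l → X) :
    empRisk f D (fun i => σs (D i)) = (∑ i, zeroOneLoss σs f (D i)) / l :=
  one_div_mul_eq_div _ _

lemma traceCard_zeroOneLoss_le (σs : X → Bool) (F : Finset (X → Bool)) (D : Fin l → X) :
    traceCard (zeroOneLoss σs) F D ≤ #(F.image fun f i => f (D i)) := by
  let r (L : Fin l → Bool) (i : Fin l) : ℝ := if L i ≠ σs (D i) then 1 else 0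
  calc traceCard (zeroOneLoss σs) F D = #((F.image fun f i => f (D i)).image r) := by
        rw [image_image, traceCard]
        congr!
    _ ≤ #(F.image fun f i => f (D i)) := card_image_le

lemma log_traceCard_zeroOneLoss_le (σs : X → Bool) (F : Finset (X → Bool)) (D : Fin l → X) :
    Real.log (traceCard (zeroOneLoss σs) F D) ≤ Real.log 2 * vcEntropy F D := by
  rw [vcEntropy, Real.logb, mul_div_cancel₀ _ (Real.log_pos one_lt_two).ne']
  obtain rfl | hF := F.eq_empty_or_nonempty
  · simp [traceCard]
  gcongr
  · exact_mod_cast traceCard_pos _ hF D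
  · exact traceCard_zeroOneLoss_le σs F D

lemma entropy_bound_le_vcEntropy_bound (σs : X → Bool) (F : Finset (X → Bool)) (D : Fin l → X)
    (δ : ℝ) :
    √(6 * Real.log (traceCard (zeroOneLoss σs) F D) / l) + √(-Real.log δ / l)
      ≤ √(6 * Real.log 2) * √(vcEntropy F D / l)
        + √(Real.log 2) * √((1 - Real.logb 2 δ) / l) := by
  have log_two_pos : 0 < Real.log 2 := Real.log_pos one_lt_two
  rw [← Real.sqrt_mul (by positivity), ← Real.sqrt_mul log_two_pos.le, ← mul_div_assoc,
    ← mul_div_assoc]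
  gcongr ?_ + ?_
  · gcongr √(?_ / _)
    linarith [log_traceCard_zeroOneLoss_le σs F D]
  · gcongr √(?_ / _)
    rw [Real.logb, mul_sub, mul_div_cancel₀ _ log_two_pos.ne']
    linarith

lemma risk_le_of_sum_mul_zeroOneLoss_le [Fintype X] {p : X → ℝ} {σs f : X → Bool}
    {F : Finset (X → Bool)} {D : Fin l → X} {δ : ℝ}
    (h : ∑ x, p x * zeroOneLoss σs f x ≤ (∑ i, zeroOneLoss σs f (D i)) / Fintype.card (Fin l)
      + √(6 * Real.log (traceCard (zeroOneLoss σs) F D) / Fintype.card (Fin l))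
      + √(-Real.log δ / Fintype.card (Fin l))) :
    risk p σs f ≤ empRisk f D (fun i => σs (D i)) + √(6 * Real.log 2) * √(vcEntropy F D / l)
      + √(Real.log 2) * √((1 - Real.logb 2 δ) / l) := by
  rw [Fintype.card_fin] at h
  rw [risk_eq_sum_mul_zeroOneLoss, empRisk_eq_sum_zeroOneLoss_div]
  linarith [entropy_bound_le_vcEntropy_bound σs F D δ]

end ZeroOneLoss

/-- Empirical VC-entropy bound: with probability at least `1 - δ` over the
i.i.d. draw of `D` from `p`, every `f ∈ F` satisfies
`R(f) ≤ R(f,D,L) + c₁√(V(F,D)/l) + c₂√((1 - log₂ δ)/l)`,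
with `c₁ = √(6 ln 2)` and `c₂ = √(ln 2)`. -/
theorem empirical_vc_entropy_bound
    {X : Type*} [Fintype X] [Nonempty X]
    (p : X → ℝ) (hp : ∀ x, 0 ≤ p x) (hp1 : ∑ x, p x = 1)
    (σs : X → Bool) {l : ℕ} (hl : 1 ≤ l)
    (F : Finset (X → Bool)) (hF : F.Nonempty)
    (δ : ℝ) (hδ0 : 0 < δ) (hδ1 : δ < 1) :
    1 - δ ≤ ∑ D : Fin l → X,
      if ∀ f ∈ F,
          risk p σs f ≤ empRisk f D (fun i => σs (D i))
            + Real.sqrt (6 * Real.log 2) * Real.sqrt (vcEntropy F D / l)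
            + Real.sqrt (Real.log 2) * Real.sqrt ((1 - Real.logb 2 δ) / l)
        then ∏ i, p (D i) else 0 := by
  have : Nonempty (Fin l) := ⟨0, hl⟩
  have h_general := empirical_vc_entropy_bound_general (ι := Fin l) (F := F) hp hp1
    (zeroOneLoss_mem_Icc σs) hδ0 hδ1.le
  refine h_general.trans (sum_le_sum fun D _ => ?_)
  split_ifs with h_loss h_risk
  · exact le_rfl
  · exact absurd (fun f hf => risk_le_of_sum_mul_zeroOneLoss_le (h_loss f hf)) h_risk
  · exact prod_nonneg fun i _ => hp (D i)
  · exact le_rfl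
end

section
/- For every δ > 0, with probability at least 1 − δ over the i.i.d. draw of the sample D = (x_1,…,x_l) from P, every f ∈ F satisfies R(f) ≤ R(f,D,L) + 𝓡(F,D) + c₃·√((1 − log₂ δ)/l), where L = (σ*(x_1),…,σ*(x_l)) and c₃ = √(2/log₂ e) = √(2·ln 2). -/
open Classical Finset

/-- The elements of `Y = {-1,+1}` viewed as real numbers: `true ↦ +1`, `false ↦ -1`. -/
noncomputable def val (b : Bool) : ℝ := if b then 1 else -1

/-- Empirical Rademacher complexity of `F` on `D`. -/
noncomputable def rademacher {X : Type*} [Fintype X] {l : ℕ}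
    (F : Finset (X → Bool)) (hF : F.Nonempty) (D : Fin l → X) : ℝ :=
  (1 / (Fintype.card (X → Bool)) : ℝ) * ∑ σ : X → Bool,
    F.sup' hF (fun f => (1 / l : ℝ) * ∑ i, val (σ (D i)) * val (f (D i)))

/-!
Replacing the true risks by the empirical risks on an independent ghost sample makes the deviations
antisymmetric under exchanging the two samples, so random signs may be inserted; this bounds the
expected largest deviation by an expected Rademacher average with one sign per sample *index*.
In `rademacher`, however, indices at the same *point* of `X` share their sign. The passage to one
sign per point uses convexity: `u ↦ 𝔼 ε, max_{f ∈ F} ∑ x, ε x * u x * f x` is convex and invariant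
under sign changes of the `u x`, hence monotone in every `|u x|`, and a sum of independent signs
over the indices at `x` is at most the multiplicity of `x` in the sample.

The largest deviation minus the Rademacher complexity therefore has nonpositive mean, and it changes
by at most `2 / l` when one sample point is replaced. McDiarmid's inequality bounds the probability
that it reaches `ε` by `exp (-l * ε ^ 2 / 2)`, which is `δ / 2` for the `ε` of the theorem.
-/

open MeasureTheory ProbabilityTheory
open scoped NNReal BigOperators

section Concentration

theorem hasSubgaussianMGF_add_prod {A B : Type*} [MeasurableSpace A] [MeasurableSpace B]
    {ν₁ : Measure A} {ν₂ : Measure B} [SFinite ν₁] [SFinite ν₂] {f : A → ℝ} {g : A × B → ℝ}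
    {c₁ c₂ : ℝ≥0} (hg : AEStronglyMeasurable g (ν₁.prod ν₂)) (hf : HasSubgaussianMGF f c₁ ν₁)
    (hg_sub : ∀ᵐ a ∂ν₁, HasSubgaussianMGF (fun b ↦ g (a, b)) c₂ ν₂) :
    HasSubgaussianMGF (fun z ↦ f z.1 + g z) (c₁ + c₂) (ν₁.prod ν₂) := by
  have hexp (t : ℝ) (z : A × B) :
      Real.exp (t * (f z.1 + g z)) = Real.exp (t * f z.1) * Real.exp (t * g z) := by
    rw [mul_add, Real.exp_add]
  have hmeas (t : ℝ) :
      AEStronglyMeasurable (fun z ↦ Real.exp (t * (f z.1 + g z))) (ν₁.prod ν₂) := by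
    simp only [hexp]
    exact (hf.integrable_exp_mul t).aestronglyMeasurable.comp_fst.mul
      (Real.continuous_exp.comp_aestronglyMeasurable (hg.const_mul t))
  have hinner (t : ℝ) : ∀ᵐ a ∂ν₁, ∫ b, Real.exp (t * (f a + g (a, b))) ∂ν₂ ≤
      Real.exp (t * f a) * Real.exp (c₂ * t ^ 2 / 2) := by
    filter_upwards [hg_sub] with a ha
    simp only [hexp t (a, _), integral_const_mul]
    gcongr
    exact ha.mgf_le t
  have hdom (t : ℝ) := (hf.integrable_exp_mul t).mul_const (Real.exp (c₂ * t ^ 2 / 2))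
  have hint (t : ℝ) : Integrable (fun z ↦ Real.exp (t * (f z.1 + g z))) (ν₁.prod ν₂) := by
    refine (integrable_prod_iff (hmeas t)).2 ⟨?_, ?_⟩
    · filter_upwards [hg_sub] with a ha
      simpa only [hexp t (a, _)] using (ha.integrable_exp_mul t).const_mul _
    · simp only [Real.norm_eq_abs, Real.abs_exp]
      refine (hdom t).mono' (hmeas t).integral_prod_right' ?_
      filter_upwards [hinner t] with a ha
      rwa [Real.norm_of_nonneg (integral_nonneg fun _ ↦ (Real.exp_pos _).le)]
  refine ⟨hint, fun t ↦ ?_⟩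
  calc ∫ z, Real.exp (t * (f z.1 + g z)) ∂ν₁.prod ν₂
      = ∫ a, ∫ b, Real.exp (t * (f a + g (a, b))) ∂ν₂ ∂ν₁ := integral_prod _ (hint t)
    _ ≤ ∫ a, Real.exp (t * f a) * Real.exp (c₂ * t ^ 2 / 2) ∂ν₁ :=
        integral_mono_ae (hint t).integral_prod_left (hdom t) (hinner t)
    _ = mgf f ν₁ t * Real.exp (c₂ * t ^ 2 / 2) := integral_mul_const _ _
    _ ≤ Real.exp (c₁ * t ^ 2 / 2) * Real.exp (c₂ * t ^ 2 / 2) := by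
        gcongr
        exact hf.mgf_le t
    _ = Real.exp (↑(c₁ + c₂) * t ^ 2 / 2) := by
        rw [← Real.exp_add, NNReal.coe_add]
        ring_nf

theorem hasSubgaussianMGF_of_abs_sub_le {Ω : Type*} [MeasurableSpace Ω] {μ : Measure Ω}
    [IsProbabilityMeasure μ] {f : Ω → ℝ} (hf : AEMeasurable f μ) {c : ℝ≥0}
    (hc : ∀ x y, |f x - f y| ≤ c) :
    HasSubgaussianMGF (fun x ↦ f x - μ[f]) ((c / 2) ^ 2) μ := by
  obtain ⟨x₀⟩ := μ.nonempty_of_neZero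
  have : Nonempty Ω := ⟨x₀⟩
  have hbdd : BddBelow (Set.range f) :=
    ⟨f x₀ - c, Set.forall_mem_range.2 fun x ↦ by linarith [(abs_le.1 (hc x x₀)).1]⟩
  have hrange (x : Ω) : f x ∈ Set.Icc (⨅ y, f y) ((⨅ y, f y) + c) :=
    ⟨ciInf_le hbdd x, sub_le_iff_le_add.1 <|
      le_ciInf fun y ↦ by linarith [(abs_le.1 (hc x y)).2]⟩
  simpa using hasSubgaussianMGF_of_mem_Icc hf (.of_forall hrange)

theorem hasSubgaussianMGF_prod_of_abs_sub_le {A B : Type*} [MeasurableSpace A]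
    [MeasurableSpace B] {ν₁ : Measure A} {ν₂ : Measure B} [IsProbabilityMeasure ν₁]
    [IsProbabilityMeasure ν₂] {f : A × B → ℝ} (hf : Measurable f) {c₁ c₂ : ℝ≥0}
    (hc : ∀ x y b, |f (x, b) - f (y, b)| ≤ c₁)
    (hslice : ∀ a, HasSubgaussianMGF (fun b ↦ f (a, b) - ∫ b', f (a, b') ∂ν₂) c₂ ν₂) :
    HasSubgaussianMGF (fun z ↦ f z - ∫ z', f z' ∂ν₁.prod ν₂) ((c₁ / 2) ^ 2 + c₂)
      (ν₁.prod ν₂) := by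
  let h := fun a ↦ ∫ b, f (a, b) ∂ν₂
  have hslice_int (a : A) : Integrable (fun b ↦ f (a, b)) ν₂ :=
    ((hslice a).integrable.add (integrable_const (h a))).congr (.of_forall fun _ ↦ by simp [h])
  have h_meas : Measurable h := hf.stronglyMeasurable.integral_prod_right'.measurable
  have h_diff (x y : A) : |h x - h y| ≤ c₁ := by
    rw [← integral_sub (hslice_int x) (hslice_int y), ← Real.norm_eq_abs]
    exact (norm_integral_le_of_norm_le_const (C := c₁) (.of_forall (hc x y))).trans_eq (by simp)
  have hprod : HasSubgaussianMGF (fun z ↦ f z - ∫ a, h a ∂ν₁) ((c₁ / 2) ^ 2 + c₂)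
      (ν₁.prod ν₂) :=
    (hasSubgaussianMGF_add_prod (hf.sub (h_meas.comp measurable_fst)).aestronglyMeasurable
      (hasSubgaussianMGF_of_abs_sub_le h_meas.aemeasurable h_diff) (.of_forall hslice)).congr
      (.of_forall fun z ↦ by simp only [Pi.sub_apply, Function.comp_apply]; ring)
  have hf_int : Integrable f (ν₁.prod ν₂) :=
    (hprod.integrable.add (integrable_const (∫ a, h a ∂ν₁))).congr (.of_forall fun _ ↦ by simp)
  rwa [integral_prod _ hf_int]

/-- **McDiarmid's inequality**. -/
theorem hasSubgaussianMGF_of_bounded_differences {n : ℕ} {Ω : Fin n → Type*}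
    [∀ i, MeasurableSpace (Ω i)] (μ : ∀ i, Measure (Ω i)) [∀ i, IsProbabilityMeasure (μ i)]
    {f : (∀ i, Ω i) → ℝ} (hf : Measurable f) {c : Fin n → ℝ≥0}
    (hc : ∀ ω i b, |f (Function.update ω i b) - f ω| ≤ c i) :
    HasSubgaussianMGF (fun ω ↦ f ω - ∫ ω', f ω' ∂Measure.pi μ) (∑ i, (c i / 2) ^ 2)
      (Measure.pi μ) := by
  induction n with
  | zero => simp [integral_unique, Subsingleton.elim _ (default : ∀ i, Ω i)]
  | succ n ih =>
    let ν := Measure.pi fun i : Fin n ↦ μ i.succ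
    let e : (∀ i, Ω i) ≃ᵐ Ω 0 × (∀ i : Fin n, Ω i.succ) := MeasurableEquiv.piFinSuccAbove Ω 0
    have he : MeasurePreserving e (Measure.pi μ) ((μ 0).prod ν) :=
      measurePreserving_piFinSuccAbove μ 0
    have he_symm (a ω) : e.symm (a, ω) = Fin.cons a ω := e.symm_apply_eq.2 rfl
    have hslice (a : Ω 0) : HasSubgaussianMGF
        (fun ω ↦ f (e.symm (a, ω)) - ∫ ω', f (e.symm (a, ω')) ∂ν)
        (∑ i : Fin n, (c i.succ / 2) ^ 2) ν := by
      refine ih (fun i ↦ μ i.succ) ((hf.comp e.symm.measurable).comp measurable_prodMk_left)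
        fun ω i b ↦ ?_
      simpa only [Function.comp_apply, he_symm, Fin.cons_update] using hc (Fin.cons a ω) i.succ b
    have hprod := hasSubgaussianMGF_prod_of_abs_sub_le (ν₁ := μ 0)
      (hf.comp e.symm.measurable) (c₁ := c 0)
      (fun x y ω ↦ by simpa [he_symm] using hc (Fin.cons y ω) 0 x) hslice
    rw [← Fin.sum_univ_succ (fun i ↦ (c i / 2) ^ 2), ← he.integral_comp', ← he.map_eq] at hprod
    simpa only [Function.comp_def, e.symm_apply_apply] using
      hprod.of_map he.measurable.aemeasurable

end Concentration

section Signs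

theorem abs_val (b : Bool) : |val b| = 1 := by
  cases b <;> simp [_root_.val]

theorem val_beq (a b : Bool) : val (a == b) = val a * val b := by
  cases a <;> cases b <;> simp [_root_.val]

theorem val_not (b : Bool) : val (!b) = -val b := by
  cases b <;> simp [_root_.val]

theorem sup'_add_le {ι : Type*} (F : Finset ι) (hF : F.Nonempty) (f g : ι → ℝ) :
    F.sup' hF (fun j ↦ f j + g j) ≤ F.sup' hF f + F.sup' hF g :=
  Finset.sup'_le _ _ fun _ hj ↦ add_le_add (F.le_sup' f hj) (F.le_sup' g hj)

/-- A convex function is maximised over a box at one of its vertices. -/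
theorem convexOn_le_of_abs_le_abs {κ : Type*} [Finite κ] {φ : (κ → ℝ) → ℝ}
    (hφ : ConvexOn ℝ Set.univ φ) (habs : ∀ u v : κ → ℝ, (∀ i, |u i| = |v i|) → φ u = φ v)
    {u v : κ → ℝ} (huv : ∀ i, |u i| ≤ |v i|) : φ u ≤ φ v := by
  have hu : u ∈ convexHull ℝ (Set.univ.pi fun i ↦ {-|v i|, |v i|}) := by
    rw [convexHull_pi]
    intro i _
    simp only [convexHull_pair, segment_eq_Icc (neg_le_self (abs_nonneg (v i)))]
    exact abs_le.1 (huv i)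
  obtain ⟨w, hw, hφw⟩ :=
    (hφ.subset (Set.subset_univ _) (convex_convexHull ℝ _)).exists_ge_of_mem_convexHull
      (subset_convexHull ℝ _) hu
  refine hφw.trans_eq (habs w v fun i ↦ ?_)
  rcases hw i trivial with h | h
  · rw [h, abs_neg, abs_abs]
  · rw [Set.mem_singleton_iff.1 h, abs_abs]

end Signs

section RademacherAverage

/-- The Rademacher average `𝔼 ε, max_{j ∈ F} ∑ i, ε i * a j i` of the finitely many vectors
`a j : κ → ℝ`, `j ∈ F`; the random signs `ε i` are encoded by Booleans through `val`. -/
noncomputable def rademacherAverage {ι κ : Type*} [Fintype κ] (F : Finset ι) (hF : F.Nonempty)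
    (a : ι → κ → ℝ) : ℝ :=
  𝔼 e : κ → Bool, F.sup' hF fun j ↦ ∑ i, val (e i) * a j i

variable {ι κ : Type*} [Fintype κ] (F : Finset ι) (hF : F.Nonempty)

theorem rademacherAverage_val_mul (c : κ → Bool) (a : ι → κ → ℝ) :
    rademacherAverage F hF (fun j i ↦ val (c i) * a j i) = rademacherAverage F hF a := by
  have hinv : Function.Involutive fun (e : κ → Bool) i ↦ e i == c i := fun e ↦
    funext fun i ↦ Bool.beq_self_right (e i) (c i)
  refine Fintype.expect_equiv hinv.toPerm _ _ fun e ↦ ?_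
  simp only [Function.Involutive.coe_toPerm, val_beq, mul_assoc]

theorem rademacherAverage_mul_congr_abs {u v : κ → ℝ} (huv : ∀ i, |u i| = |v i|)
    (a : ι → κ → ℝ) :
    rademacherAverage F hF (fun j i ↦ u i * a j i) =
      rademacherAverage F hF fun j i ↦ v i * a j i := by
  have hsign (i : κ) : val (decide (u i = v i)) * u i = v i := by
    by_cases h : u i = v i
    · simp [_root_.val, h]
    · rw [decide_eq_false h, (abs_eq_abs.1 (huv i)).resolve_left h]
      simp [_root_.val]
  rw [← rademacherAverage_val_mul F hF fun i ↦ decide (u i = v i)]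
  simp only [← mul_assoc, hsign]

theorem rademacherAverage_add_le (a b : ι → κ → ℝ) :
    rademacherAverage F hF (fun j i ↦ a j i + b j i) ≤
      rademacherAverage F hF a + rademacherAverage F hF b := by
  simp only [rademacherAverage, ← Finset.expect_add_distrib, mul_add, Finset.sum_add_distrib]
  exact Finset.expect_le_expect fun e _ ↦ sup'_add_le F hF _ _

theorem rademacherAverage_const_mul {c : ℝ} (hc : 0 ≤ c) (a : ι → κ → ℝ) :
    rademacherAverage F hF (fun j i ↦ c * a j i) = c * rademacherAverage F hF a := by
  simp only [rademacherAverage, Finset.mul_expect, Finset.mul₀_sup' hc, Finset.mul_sum,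
    mul_left_comm]

theorem rademacherAverage_le_sum {a : ι → κ → ℝ} {w : κ → ℝ} (ha : ∀ j i, |a j i| ≤ w i) :
    rademacherAverage F hF a ≤ ∑ i, w i := by
  refine Finset.expect_le Finset.univ_nonempty fun e _ ↦
    Finset.sup'_le hF _ fun j _ ↦ Finset.sum_le_sum fun i _ ↦ ?_
  calc val (e i) * a j i ≤ |val (e i) * a j i| := le_abs_self _
    _ = |a j i| := by rw [abs_mul, abs_val, one_mul]
    _ ≤ w i := ha j i

theorem convexOn_rademacherAverage_mul (a : ι → κ → ℝ) :
    ConvexOn ℝ Set.univ fun u : κ → ℝ ↦ rademacherAverage F hF fun j i ↦ u i * a j i := by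
  refine ⟨convex_univ, fun u _ v _ s t hs ht _ ↦ ?_⟩
  simp only [smul_eq_mul, ← rademacherAverage_const_mul F hF hs,
    ← rademacherAverage_const_mul F hF ht]
  refine le_of_eq_of_le ?_ (rademacherAverage_add_le F hF _ _)
  simp only [Pi.add_apply, Pi.smul_apply, smul_eq_mul, add_mul, mul_assoc]

theorem rademacherAverage_mul_le_of_abs_le_abs {u v : κ → ℝ} (huv : ∀ i, |u i| ≤ |v i|)
    (a : ι → κ → ℝ) :
    rademacherAverage F hF (fun j i ↦ u i * a j i) ≤
      rademacherAverage F hF fun j i ↦ v i * a j i :=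
  convexOn_le_of_abs_le_abs (convexOn_rademacherAverage_mul F hF a)
    (fun _ _ h ↦ rademacherAverage_mul_congr_abs F hF h a) huv

end RademacherAverage

section SampleWeight

/-- The total weight that the indices of the sample `D` carry at the point `x` when index `i` has
weight `w i`; for `w = 1` it is the multiplicity of `x` in the sample. -/
noncomputable def sampleWeight {κ X : Type*} [Fintype κ] (D : κ → X) (w : κ → ℝ) (x : X) : ℝ :=
  ∑ i with D i = x, w i

variable {κ X : Type*} [Fintype κ]

theorem sum_sampleWeight_mul [Fintype X] (D : κ → X) (w : κ → ℝ) (h : X → ℝ) :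
    ∑ x, sampleWeight D w x * h x = ∑ i, w i * h (D i) := by
  rw [← Finset.sum_fiberwise _ D]
  refine Finset.sum_congr rfl fun x _ ↦ ?_
  rw [sampleWeight, Finset.sum_mul]
  exact Finset.sum_congr rfl fun i hi ↦ by rw [(Finset.mem_filter.1 hi).2]

theorem sampleWeight_nonneg (D : κ → X) {w : κ → ℝ} (hw : 0 ≤ w) (x : X) :
    0 ≤ sampleWeight D w x :=
  Finset.sum_nonneg fun i _ ↦ hw i

theorem abs_sampleWeight_le (D : κ → X) (w : κ → ℝ) (x : X) :
    |sampleWeight D w x| ≤ sampleWeight D (fun i ↦ |w i|) x :=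
  Finset.abs_sum_le_sum_abs _ _

theorem sampleWeight_update_le [DecidableEq κ] (D : κ → X) (i : κ) (b : X) {w : κ → ℝ}
    (hw : 0 ≤ w) (x : X) :
    sampleWeight (Function.update D i b) w x ≤
      sampleWeight D w x + (Pi.single b (w i) : X → ℝ) x := by
  have hterm (j : κ) : (if Function.update D i b j = x then w j else 0) ≤
      (if D j = x then w j else 0) + if j = i then (Pi.single b (w i) : X → ℝ) x else 0 := by
    obtain rfl | hj := eq_or_ne j i
    · rw [Function.update_self, if_pos rfl, Pi.single_apply, if_congr eq_comm rfl rfl]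
      exact le_add_of_nonneg_left (ite_nonneg (hw j) le_rfl)
    · simp [hj]
  simpa [sampleWeight, Finset.sum_filter, Finset.sum_add_distrib] using
    Finset.sum_le_sum fun j (_ : j ∈ Finset.univ) ↦ hterm j

theorem rademacherAverage_comp_le {ι : Type*} [Fintype X] (F : Finset ι) (hF : F.Nonempty)
    (g : ι → X → ℝ) (D : κ → X) :
    rademacherAverage F hF (fun j i ↦ g j (D i)) ≤
      rademacherAverage F hF fun j x ↦ sampleWeight D 1 x * g j x := by
  have hsign (s : X → Bool) : rademacherAverage F hF (fun j i ↦ g j (D i)) =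
      𝔼 e : κ → Bool, F.sup' hF fun j ↦
        ∑ x, val (s x) * (sampleWeight D (fun i ↦ val (e i)) x * g j x) := by
    rw [← rademacherAverage_val_mul F hF fun i ↦ s (D i)]
    simp only [rademacherAverage, mul_left_comm (val (s _)), sum_sampleWeight_mul]
  calc rademacherAverage F hF (fun j i ↦ g j (D i))
      = 𝔼 s : X → Bool, 𝔼 e : κ → Bool, F.sup' hF fun j ↦
          ∑ x, val (s x) * (sampleWeight D (fun i ↦ val (e i)) x * g j x) := by
        simp only [← hsign, Fintype.expect_const]
    _ = 𝔼 e : κ → Bool, rademacherAverage F hF fun j x ↦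
          sampleWeight D (fun i ↦ val (e i)) x * g j x := Finset.expect_comm _ _ _
    _ ≤ rademacherAverage F hF fun j x ↦ sampleWeight D 1 x * g j x := by
        refine Finset.expect_le Finset.univ_nonempty fun e _ ↦
          rademacherAverage_mul_le_of_abs_le_abs F hF (fun x ↦ ?_) g
        refine ((abs_sampleWeight_le D _ x).trans_eq ?_).trans (le_abs_self _)
        simp only [abs_val]
        rfl

theorem rademacherAverage_sampleWeight_update_le {ι : Type*} [Fintype X] [DecidableEq κ]
    (F : Finset ι) (hF : F.Nonempty) {g : ι → X → ℝ} {C : ℝ} (hg : ∀ j x, |g j x| ≤ C)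
    (D : κ → X) (i : κ) (b : X) :
    rademacherAverage F hF (fun j x ↦ sampleWeight (Function.update D i b) 1 x * g j x) ≤
      rademacherAverage F hF (fun j x ↦ sampleWeight D 1 x * g j x) + C := by
  have hmono : rademacherAverage F hF
      (fun j x ↦ sampleWeight (Function.update D i b) 1 x * g j x) ≤
      rademacherAverage F hF fun j x ↦
        (sampleWeight D 1 x + (Pi.single b 1 : X → ℝ) x) * g j x :=
    rademacherAverage_mul_le_of_abs_le_abs F hF (fun x ↦ abs_le_abs_of_nonneg
      (sampleWeight_nonneg _ zero_le_one x) (sampleWeight_update_le D i b zero_le_one x)) g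
  have hsingle : rademacherAverage F hF (fun j x ↦ (Pi.single b 1 : X → ℝ) x * g j x) ≤ C := by
    refine (rademacherAverage_le_sum F hF (w := Pi.single b C) fun j x ↦ ?_).trans_eq (by simp)
    obtain rfl | hx := eq_or_ne x b
    · simpa using hg j x
    · simp [hx]
  simp only [add_mul] at hmono
  exact hmono.trans ((rademacherAverage_add_le F hF _ _).trans (by gcongr))

end SampleWeight

section Symmetrization

theorem integral_comp_of_measurePreserving {A B : Type*} [MeasurableSpace A] [MeasurableSpace B]
    {ν₁ : Measure A} {ν₂ : Measure B} {T : A → B} (hT : MeasurePreserving T ν₁ ν₂) {f : B → ℝ}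
    (hf : AEStronglyMeasurable f ν₂) : ∫ a, f (T a) ∂ν₁ = ∫ b, f b ∂ν₂ := by
  rw [← hT.map_eq] at hf ⊢
  exact (integral_map hT.aemeasurable hf).symm

variable {ι : Type*} (F : Finset ι) (hF : F.Nonempty)

theorem integrable_finset_sup' {A : Type*} [MeasurableSpace A] {ν : Measure A} {f : ι → A → ℝ}
    (hf : ∀ j ∈ F, Integrable (f j) ν) : Integrable (fun a ↦ F.sup' hF fun j ↦ f j a) ν := by
  simp only [← Finset.sup'_apply]
  exact Finset.sup'_induction hF f (p := (Integrable · ν)) (fun _ h _ h' ↦ h.sup h') hf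

theorem sup'_integral_le_integral_sup' {A : Type*} [MeasurableSpace A] {ν : Measure A}
    {f : ι → A → ℝ} (hf : ∀ j ∈ F, Integrable (f j) ν) :
    F.sup' hF (fun j ↦ ∫ a, f j a ∂ν) ≤ ∫ a, F.sup' hF (fun j ↦ f j a) ∂ν :=
  Finset.sup'_le _ _ fun j hj ↦ integral_mono (hf j hj) (integrable_finset_sup' F hF hf)
    fun a ↦ F.le_sup' (fun j ↦ f j a) hj

theorem integral_sup'_integral_sub_le {A : Type*} [MeasurableSpace A] {ν : Measure A}
    [IsProbabilityMeasure ν] {f : ι → A → ℝ} (hf : ∀ j, Integrable (f j) ν) :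
    ∫ a, F.sup' hF (fun j ↦ ∫ b, f j b ∂ν - f j a) ∂ν ≤
      ∫ z, F.sup' hF (fun j ↦ f j z.2 - f j z.1) ∂ν.prod ν := by
  have hint : Integrable (fun z ↦ F.sup' hF fun j ↦ f j z.2 - f j z.1) (ν.prod ν) :=
    integrable_finset_sup' F hF fun j _ ↦ ((hf j).comp_snd ν).sub ((hf j).comp_fst ν)
  rw [integral_prod _ hint]
  refine integral_mono (integrable_finset_sup' F hF fun j _ ↦ (integrable_const _).sub (hf j))
    hint.integral_prod_left fun a ↦ ?_
  convert! sup'_integral_le_integral_sup' F hF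
    (fun j _ ↦ (hf j).sub (integrable_const (f j a))) using 3 with j
  simp [integral_sub (hf j) (integrable_const _)]

variable {κ X : Type*} [Fintype κ] [MeasurableSpace X] {μ : Measure X} {g : ι → X → ℝ}

theorem integrable_sup'_sum_comp {A : Type*} [MeasurableSpace A] {ν : Measure A}
    {Y : κ → A → X} (hY : ∀ i, MeasurePreserving (Y i) ν μ) (hg : ∀ j, Integrable (g j) μ)
    (w : κ → ℝ) :
    Integrable (fun a ↦ F.sup' hF fun j ↦ ∑ i, w i * g j (Y i a)) ν :=
  integrable_finset_sup' F hF fun j _ ↦ integrable_finsetSum _ fun i _ ↦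
    ((hY i).integrable_comp_of_integrable (hg j)).const_mul _

variable [IsProbabilityMeasure μ]

theorem integral_sup'_sum_val_mul_of_antisymm {h : ι → X × X → ℝ}
    (hh : ∀ j, Integrable (h j) (μ.prod μ)) (hanti : ∀ j z, h j z.swap = -h j z)
    (e : κ → Bool) :
    ∫ Z : κ → X × X, F.sup' hF (fun j ↦ ∑ i, val (e i) * h j (Z i))
        ∂Measure.pi (fun _ ↦ μ.prod μ) =
      ∫ Z : κ → X × X, F.sup' hF (fun j ↦ ∑ i, h j (Z i)) ∂Measure.pi (fun _ ↦ μ.prod μ) := by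
  have hint := integrable_sup'_sum_comp (κ := κ) F hF
    (fun i ↦ measurePreserving_eval (fun _ ↦ μ.prod μ) i) hh 1
  simp only [Pi.one_apply, one_mul] at hint
  let swap (i : κ) (z : X × X) : X × X := if e i then z else z.swap
  have hswap : MeasurePreserving (fun (Z : κ → X × X) i ↦ swap i (Z i))
      (Measure.pi fun _ ↦ μ.prod μ) (Measure.pi fun _ ↦ μ.prod μ) := by
    refine measurePreserving_pi _ _ fun i ↦ ?_
    cases hi : e i
    · simpa only [swap, hi] using! Measure.measurePreserving_swap
    · simpa only [swap, hi] using! MeasurePreserving.id _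
  have hval (i : κ) (z : X × X) (j : ι) : h j (swap i z) = val (e i) * h j z := by
    cases hi : e i <;> simp [swap, hi, hanti, _root_.val]
  rw [← integral_comp_of_measurePreserving hswap hint.aestronglyMeasurable]
  simp only [hval]

theorem integral_sup'_sum_sub_le_add (hg : ∀ j, Integrable (g j) μ) (e : κ → Bool) :
    ∫ Z : κ → X × X, F.sup' hF (fun j ↦ ∑ i, (g j (Z i).2 - g j (Z i).1))
        ∂Measure.pi (fun _ ↦ μ.prod μ) ≤
      ∫ D : κ → X, F.sup' hF (fun j ↦ ∑ i, val (e i) * g j (D i)) ∂Measure.pi (fun _ ↦ μ) +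
      ∫ D : κ → X, F.sup' hF (fun j ↦ ∑ i, val (!e i) * g j (D i)) ∂Measure.pi (fun _ ↦ μ) := by
  let P := Measure.pi fun _ : κ ↦ μ
  let Q := Measure.pi fun _ : κ ↦ μ.prod μ
  let S (e : κ → Bool) (D : κ → X) := F.sup' hF fun j ↦ ∑ i, val (e i) * g j (D i)
  have hS (e : κ → Bool) : Integrable (S e) P :=
    integrable_sup'_sum_comp F hF (fun i ↦ measurePreserving_eval _ i) hg _
  have hsnd : MeasurePreserving (fun (Z : κ → X × X) i ↦ (Z i).2) Q P :=
    measurePreserving_pi _ _ fun _ ↦ measurePreserving_snd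
  have hfst : MeasurePreserving (fun (Z : κ → X × X) i ↦ (Z i).1) Q P :=
    measurePreserving_pi _ _ fun _ ↦ measurePreserving_fst
  have hS_snd := hsnd.integrable_comp_of_integrable (hS e)
  have hS_fst := hfst.integrable_comp_of_integrable (hS fun i ↦ !e i)
  have hdiff (j : ι) : Integrable (fun z : X × X ↦ g j z.2 - g j z.1) (μ.prod μ) :=
    ((hg j).comp_snd μ).sub ((hg j).comp_fst μ)
  calc ∫ Z, F.sup' hF (fun j ↦ ∑ i, (g j (Z i).2 - g j (Z i).1)) ∂Q
      = ∫ Z, F.sup' hF (fun j ↦ ∑ i, val (e i) * (g j (Z i).2 - g j (Z i).1)) ∂Q :=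
        (integral_sup'_sum_val_mul_of_antisymm F hF hdiff (fun _ _ ↦ (neg_sub _ _).symm) e).symm
    _ ≤ ∫ Z, (S e (fun i ↦ (Z i).2) + S (fun i ↦ !e i) (fun i ↦ (Z i).1)) ∂Q := by
        refine integral_mono (integrable_sup'_sum_comp F hF
          (fun i ↦ measurePreserving_eval _ i) hdiff _) (hS_snd.add hS_fst) fun Z ↦ ?_
        simpa only [S, val_not, neg_mul, sub_eq_add_neg, mul_add, mul_neg,
          Finset.sum_add_distrib] using
          sup'_add_le F hF (fun j ↦ ∑ i, val (e i) * g j (Z i).2)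
            fun j ↦ ∑ i, val (!e i) * g j (Z i).1
    _ = ∫ D, S e D ∂P + ∫ D, S (fun i ↦ !e i) D ∂P := by
        rw [← integral_comp_of_measurePreserving hsnd (hS e).aestronglyMeasurable,
          ← integral_comp_of_measurePreserving hfst (hS _).aestronglyMeasurable]
        exact integral_add hS_snd hS_fst

theorem integral_rademacherAverage_comp (hg : ∀ j, Integrable (g j) μ) :
    ∫ D : κ → X, rademacherAverage F hF (fun j i ↦ g j (D i)) ∂Measure.pi (fun _ ↦ μ) =
      𝔼 e : κ → Bool, ∫ D : κ → X, F.sup' hF (fun j ↦ ∑ i, val (e i) * g j (D i))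
        ∂Measure.pi (fun _ ↦ μ) := by
  simp only [rademacherAverage, Fintype.expect_eq_sum_div_card]
  rw [integral_div, integral_finsetSum _ fun e _ ↦
    integrable_sup'_sum_comp F hF (fun i ↦ measurePreserving_eval _ i) hg _]

theorem integral_sup'_sum_integral_sub_le (hg : ∀ j, Integrable (g j) μ) :
    ∫ D : κ → X, F.sup' hF (fun j ↦ ∑ i, (∫ x, g j x ∂μ - g j (D i))) ∂Measure.pi (fun _ ↦ μ) ≤
      2 * ∫ D : κ → X, rademacherAverage F hF (fun j i ↦ g j (D i)) ∂Measure.pi (fun _ ↦ μ) := by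
  have hg_eval (j : ι) (i : κ) :
      Integrable (fun D : κ → X ↦ g j (D i)) (Measure.pi fun _ ↦ μ) :=
    integrable_comp_eval (hg j)
  have hmean (j : ι) : ∫ D : κ → X, ∑ i, g j (D i) ∂Measure.pi (fun _ ↦ μ) =
      ∑ _i : κ, ∫ x, g j x ∂μ := by
    rw [integral_finsetSum _ fun i _ ↦ hg_eval j i]
    exact Finset.sum_congr rfl fun i _ ↦ integral_comp_eval (hg j).aestronglyMeasurable
  calc ∫ D : κ → X, F.sup' hF (fun j ↦ ∑ i, (∫ x, g j x ∂μ - g j (D i))) ∂Measure.pi (fun _ ↦ μ)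
      ≤ ∫ z : (κ → X) × (κ → X), F.sup' hF (fun j ↦ ∑ i, g j (z.2 i) - ∑ i, g j (z.1 i))
          ∂(Measure.pi fun _ ↦ μ).prod (Measure.pi fun _ ↦ μ) := by
        simp only [Finset.sum_sub_distrib, ← hmean]
        exact integral_sup'_integral_sub_le F hF fun j ↦
          integrable_finsetSum _ fun i _ ↦ hg_eval j i
    _ = ∫ Z : κ → X × X, F.sup' hF (fun j ↦ ∑ i, (g j (Z i).2 - g j (Z i).1))
          ∂Measure.pi (fun _ ↦ μ.prod μ) := by
        rw [← (measurePreserving_arrowProdEquivProdArrow X X κ (fun _ ↦ μ)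
          (fun _ ↦ μ)).integral_comp']
        simp only [Finset.sum_sub_distrib]
        rfl
    _ ≤ (𝔼 e : κ → Bool, ∫ D : κ → X, F.sup' hF (fun j ↦ ∑ i, val (e i) * g j (D i))
          ∂Measure.pi (fun _ ↦ μ)) +
          𝔼 e : κ → Bool, ∫ D : κ → X, F.sup' hF (fun j ↦ ∑ i, val (!e i) * g j (D i))
          ∂Measure.pi (fun _ ↦ μ) := by
        rw [← Finset.expect_add_distrib]
        exact Finset.le_expect Finset.univ_nonempty fun e _ ↦
          integral_sup'_sum_sub_le_add F hF hg e
    _ = 2 * ∫ D : κ → X, rademacherAverage F hF (fun j i ↦ g j (D i)) ∂Measure.pi (fun _ ↦ μ) := by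
        have hinv : Function.Involutive fun (e : κ → Bool) i ↦ !e i := fun e ↦
          funext fun i ↦ Bool.not_not (e i)
        rw [integral_rademacherAverage_comp F hF hg, two_mul]
        congr 1
        exact Fintype.expect_equiv hinv.toPerm _ _ fun _ ↦ rfl

end Symmetrization

section RiskDeviation

theorem exists_isProbabilityMeasure_real_singleton {X : Type*} [Fintype X] [MeasurableSpace X]
    [MeasurableSingletonClass X] {p : X → ℝ} (hp : ∀ x, 0 ≤ p x) (hp1 : ∑ x, p x = 1) :
    ∃ μ : Measure X, IsProbabilityMeasure μ ∧ ∀ x, μ.real {x} = p x := by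
  let P : PMF X := PMF.ofFintype (fun x ↦ ENNReal.ofReal (p x)) <| by
    rw [← ENNReal.ofReal_sum_of_nonneg fun x _ ↦ hp x, hp1, ENNReal.ofReal_one]
  refine ⟨P.toMeasure, inferInstance, fun x ↦ ?_⟩
  rw [measureReal_def, P.toMeasure_apply_singleton x (measurableSet_singleton x)]
  exact ENNReal.toReal_ofReal (hp x)

theorem sum_ite_prod_real_singleton {κ X : Type*} [Fintype κ] [DecidableEq κ] [Fintype X]
    [MeasurableSpace X] [MeasurableSingletonClass X] (μ : Measure X) [SigmaFinite μ]
    (q : (κ → X) → Prop) [DecidablePred q] :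
    ∑ D, (if q D then ∏ i, μ.real {D i} else 0) = (Measure.pi fun _ ↦ μ).real {D | q D} := by
  have hprod (D : κ → X) : ∏ i, μ.real {D i} = (Measure.pi fun _ ↦ μ).real {D} := by
    simp only [measureReal_def, Measure.pi_singleton, ENNReal.toReal_prod]
  simp only [hprod, ← Finset.sum_filter]
  rw [sum_measureReal_singleton, Finset.coe_filter_univ]

theorem ite_ne_eq_one_add_val_mul (a b : Bool) :
    (if a ≠ b then 1 else 0 : ℝ) = (1 + val (!b) * val a) / 2 := by
  cases a <;> cases b <;> norm_num [_root_.val]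

theorem sum_comp_update {κ X : Type*} [Fintype κ] [DecidableEq κ] (h : X → ℝ) (D : κ → X)
    (i : κ) (b : X) :
    ∑ j, h (Function.update D i b j) = ∑ j, h (D j) + (h b - h (D i)) := by
  simp only [Function.apply_update (fun _ ↦ h)]
  rw [Finset.sum_update_of_mem (Finset.mem_univ i),
    Finset.sum_eq_add_sum_sdiff_singleton_of_mem (Finset.mem_univ i) fun j ↦ h (D j)]
  ring

theorem abs_update_sub_le {κ X : Type*} [DecidableEq κ] {φ : (κ → X) → ℝ} {c : ℝ}
    (hφ : ∀ D i b, φ (Function.update D i b) ≤ φ D + c) (D : κ → X) (i : κ) (b : X) :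
    |φ (Function.update D i b) - φ D| ≤ c := by
  have hback := hφ (Function.update D i b) i (D i)
  rw [Function.update_idem, Function.update_eq_self] at hback
  exact abs_sub_le_iff.2 ⟨by linarith [hφ D i b], by linarith⟩

/-- The largest amount by which the risk of a function in `F` exceeds its empirical risk on the
sample `D` labelled by the supervisor `σs`. -/
noncomputable def maxRiskDeviation {X : Type*} [Fintype X] (p : X → ℝ) (σs : X → Bool) {l : ℕ}
    (F : Finset (X → Bool)) (hF : F.Nonempty) (D : Fin l → X) : ℝ :=
  F.sup' hF fun f ↦ risk p σs f - empRisk f D fun i ↦ σs (D i)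

theorem risk_sub_empRisk_le_maxRiskDeviation {X : Type*} [Fintype X] (p : X → ℝ)
    (σs : X → Bool) {l : ℕ} {F : Finset (X → Bool)} (hF : F.Nonempty) (D : Fin l → X)
    {f : X → Bool} (hf : f ∈ F) :
    risk p σs f - empRisk f D (fun i ↦ σs (D i)) ≤ maxRiskDeviation p σs F hF D :=
  F.le_sup' (fun f ↦ risk p σs f - empRisk f D fun i ↦ σs (D i)) hf

variable {X : Type*} [Fintype X] (F : Finset (X → Bool)) (hF : F.Nonempty) {l : ℕ}

theorem rademacher_eq_rademacherAverage (D : Fin l → X) :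
    rademacher F hF D =
      1 / l * rademacherAverage F hF fun f x ↦ sampleWeight D 1 x * val (f x) := by
  have hl : (0 : ℝ) ≤ 1 / l := by positivity
  rw [rademacher, one_div_mul_eq_div, ← Fintype.expect_eq_sum_div_card]
  simp only [rademacherAverage, Finset.mul_expect, mul_left_comm (_root_.val _),
    sum_sampleWeight_mul, Pi.one_apply, one_mul, Finset.mul₀_sup' hl]

theorem rademacher_update_le (D : Fin l → X) (i : Fin l) (b : X) :
    rademacher F hF (Function.update D i b) ≤ rademacher F hF D + 1 / l := by
  simp only [rademacher_eq_rademacherAverage]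
  rw [← mul_add_one]
  gcongr
  exact rademacherAverage_sampleWeight_update_le F hF (fun f x ↦ (abs_val (f x)).le) D i b

theorem maxRiskDeviation_update_le (p : X → ℝ) (σs : X → Bool) (D : Fin l → X) (i : Fin l)
    (b : X) :
    maxRiskDeviation p σs F hF (Function.update D i b) ≤
      maxRiskDeviation p σs F hF D + 1 / l := by
  refine Finset.sup'_le _ _ fun f hf ↦ ?_
  have hemp : empRisk f D (fun i ↦ σs (D i)) ≤
      empRisk f (Function.update D i b) (fun j ↦ σs (Function.update D i b j)) + 1 / l := by
    rw [empRisk, empRisk, ← mul_add_one,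
      sum_comp_update (fun x ↦ if f x ≠ σs x then (1 : ℝ) else 0)]
    gcongr
    split_ifs <;> linarith
  linarith [risk_sub_empRisk_le_maxRiskDeviation p σs hF D hf]

variable [MeasurableSpace X] [MeasurableSingletonClass X] (μ : Measure X) [IsProbabilityMeasure μ]
  (σs : X → Bool)

theorem risk_eq_integral (f : X → Bool) :
    risk (fun x ↦ μ.real {x}) σs f = ∫ x, (1 + val (!σs x) * val (f x)) / 2 ∂μ := by
  simp only [risk, ite_ne_eq_one_add_val_mul, integral_fintype Integrable.of_finite, smul_eq_mul,
    mul_comm]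

theorem risk_sub_empRisk (hl : l ≠ 0) (D : Fin l → X) (f : X → Bool) :
    risk (fun x ↦ μ.real {x}) σs f - empRisk f D (fun i ↦ σs (D i)) =
      1 / (2 * l) * ∑ i, (∫ x, val (!σs x) * val (f x) ∂μ - val (!σs (D i)) * val (f (D i))) := by
  have hl' : (l : ℝ) ≠ 0 := Nat.cast_ne_zero.2 hl
  simp only [risk_eq_integral, empRisk, ite_ne_eq_one_add_val_mul, integral_div,
    integral_add (integrable_const _) Integrable.of_finite, integral_const, probReal_univ,
    smul_eq_mul, Finset.sum_sub_distrib, Finset.sum_const, ← Finset.sum_div,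
    Finset.sum_add_distrib, Finset.card_univ, Fintype.card_fin, nsmul_eq_mul]
  field_simp
  ring

theorem integral_maxRiskDeviation_le_integral_rademacher (hl : l ≠ 0) :
    ∫ D : Fin l → X, maxRiskDeviation (fun x ↦ μ.real {x}) σs F hF D ∂Measure.pi (fun _ ↦ μ) ≤
      ∫ D : Fin l → X, rademacher F hF D ∂Measure.pi (fun _ ↦ μ) := by
  let g (f : X → Bool) (x : X) := val (!σs x) * val (f x)
  have hlabel (D : Fin l → X) : rademacherAverage F hF (fun f i ↦ g f (D i)) =
      rademacherAverage F hF fun f i ↦ val (f (D i)) :=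
    rademacherAverage_val_mul F hF (fun i ↦ !σs (D i)) _
  calc ∫ D : Fin l → X, maxRiskDeviation (fun x ↦ μ.real {x}) σs F hF D ∂Measure.pi (fun _ ↦ μ)
      = 1 / (2 * l) * ∫ D : Fin l → X, F.sup' hF (fun f ↦ ∑ i, (∫ x, g f x ∂μ - g f (D i)))
          ∂Measure.pi (fun _ ↦ μ) := by
        simp only [maxRiskDeviation, risk_sub_empRisk μ σs hl, ← integral_const_mul,
          Finset.mul₀_sup' (show (0 : ℝ) ≤ 1 / (2 * l) by positivity), g]
    _ ≤ 1 / (2 * l) * (2 * ∫ D : Fin l → X, rademacherAverage F hF (fun f i ↦ g f (D i))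
          ∂Measure.pi (fun _ ↦ μ)) := by
        gcongr
        exact integral_sup'_sum_integral_sub_le F hF fun _ ↦ .of_finite
    _ = ∫ D : Fin l → X, 1 / l * rademacherAverage F hF (fun f i ↦ val (f (D i)))
          ∂Measure.pi (fun _ ↦ μ) := by
        simp only [hlabel, integral_const_mul]
        ring
    _ ≤ ∫ D : Fin l → X, rademacher F hF D ∂Measure.pi (fun _ ↦ μ) := by
        refine integral_mono .of_finite .of_finite fun D ↦ ?_
        simp only [rademacher_eq_rademacherAverage]
        gcongr
        exact rademacherAverage_comp_le F hF (fun f x ↦ val (f x)) D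

theorem measureReal_rademacher_add_le_maxRiskDeviation_le (hl : l ≠ 0) {ε : ℝ} (hε : 0 ≤ ε) :
    (Measure.pi fun _ ↦ μ).real {D : Fin l → X |
        rademacher F hF D + ε ≤ maxRiskDeviation (fun x ↦ μ.real {x}) σs F hF D} ≤
      Real.exp (-(l * ε ^ 2 / 2)) := by
  let P := Measure.pi fun _ : Fin l ↦ μ
  let φ (D : Fin l → X) := maxRiskDeviation (fun x ↦ μ.real {x}) σs F hF D - rademacher F hF D
  have hφ_mean : ∫ D, φ D ∂P ≤ 0 := by
    rw [integral_sub .of_finite .of_finite, sub_nonpos]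
    exact integral_maxRiskDeviation_le_integral_rademacher F hF μ σs hl
  have hφ_diff (D : Fin l → X) (i : Fin l) (b : X) :
      |φ (Function.update D i b) - φ D| ≤ (2 / l : ℝ≥0) := by
    have hdev := abs_update_sub_le
      (maxRiskDeviation_update_le F hF (l := l) (fun x ↦ μ.real {x}) σs) D i b
    have hrad := abs_update_sub_le (rademacher_update_le F hF (l := l)) D i b
    calc |φ (Function.update D i b) - φ D| ≤ 1 / l + 1 / l := by
          rw [sub_sub_sub_comm]
          exact (abs_sub _ _).trans (add_le_add hdev hrad)
      _ = (2 / l : ℝ≥0) := by push_cast; ring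
  have hφ_tail := (hasSubgaussianMGF_of_bounded_differences (fun _ ↦ μ)
    (measurable_of_finite φ) hφ_diff).measure_ge_le hε
  calc P.real {D | rademacher F hF D + ε ≤ maxRiskDeviation (fun x ↦ μ.real {x}) σs F hF D}
      ≤ P.real {D | ε ≤ φ D - ∫ D', φ D' ∂P} := by
        refine measureReal_mono fun D hD ↦ ?_
        change ε ≤ φ D - _
        exact le_sub_iff_add_le.2 ((add_le_of_nonpos_right hφ_mean).trans (le_sub_iff_add_le'.2 hD))
    _ ≤ Real.exp (-(l * ε ^ 2 / 2)) := by
        convert! hφ_tail using 2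
        have hl' : (l : ℝ) ≠ 0 := Nat.cast_ne_zero.2 hl
        simp only [Finset.sum_const, Finset.card_univ, Fintype.card_fin, nsmul_eq_mul,
          NNReal.coe_mul, NNReal.coe_natCast, NNReal.coe_pow, NNReal.coe_div, NNReal.coe_ofNat]
        field_simp

end RiskDeviation

theorem exp_neg_mul_sq_confidence_div_two {δ : ℝ} (hδ0 : 0 < δ) (hδ2 : δ ≤ 2) {l : ℕ}
    (hl : l ≠ 0) :
    Real.exp (-(l * (Real.sqrt (2 * Real.log 2) *
      Real.sqrt ((1 - Real.logb 2 δ) / l)) ^ 2 / 2)) = δ / 2 := by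
  have hl' : (l : ℝ) ≠ 0 := Nat.cast_ne_zero.2 hl
  have hlogb : Real.logb 2 δ ≤ 1 := by
    rwa [Real.logb_le_iff_le_rpow one_lt_two hδ0, Real.rpow_one]
  have hexponent : -(l * (Real.sqrt (2 * Real.log 2) *
      Real.sqrt ((1 - Real.logb 2 δ) / l)) ^ 2 / 2) = Real.log (δ / 2) := by
    rw [mul_pow, Real.sq_sqrt (by positivity),
      Real.sq_sqrt (div_nonneg (sub_nonneg.2 hlogb) l.cast_nonneg),
      Real.log_div hδ0.ne' two_ne_zero, Real.logb]
    field_simp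
    ring
  rw [hexponent, Real.exp_log (half_pos hδ0)]

/-- Empirical Rademacher bound: with probability at least `1 - δ` over the
i.i.d. draw of `D` from `p`, every `f ∈ F` satisfies
`R(f) ≤ R(f,D,L) + 𝓡(F,D) + c₃√((1 - log₂ δ)/l)`, with `c₃ = √(2 ln 2)`. -/
theorem empirical_rademacher_bound
    {X : Type*} [Fintype X] [Nonempty X]
    (p : X → ℝ) (hp : ∀ x, 0 ≤ p x) (hp1 : ∑ x, p x = 1)
    (σs : X → Bool) {l : ℕ} (hl : 1 ≤ l)
    (F : Finset (X → Bool)) (hF : F.Nonempty)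
    (δ : ℝ) (hδ0 : 0 < δ) (hδ1 : δ < 1) :
    1 - δ ≤ ∑ D : Fin l → X,
      if ∀ f ∈ F,
          risk p σs f ≤ empRisk f D (fun i => σs (D i))
            + rademacher F hF D
            + Real.sqrt (2 * Real.log 2) * Real.sqrt ((1 - Real.logb 2 δ) / l)
        then ∏ i, p (D i) else 0 := by
  let _ : MeasurableSpace X := ⊤
  have hl' : l ≠ 0 := Nat.one_le_iff_ne_zero.1 hl
  obtain ⟨μ, _, hμ⟩ := exists_isProbabilityMeasure_real_singleton hp hp1
  obtain rfl : (fun x ↦ μ.real {x}) = p := funext hμ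
  let P := Measure.pi fun _ : Fin l ↦ μ
  let ε := Real.sqrt (2 * Real.log 2) * Real.sqrt ((1 - Real.logb 2 δ) / l)
  let bad : Set (Fin l → X) :=
    {D | rademacher F hF D + ε ≤ maxRiskDeviation (fun x ↦ μ.real {x}) σs F hF D}
  beta_reduce
  rw [sum_ite_prod_real_singleton]
  calc 1 - δ ≤ 1 - P.real bad := by
        gcongr
        refine (measureReal_rademacher_add_le_maxRiskDeviation_le F hF μ σs hl'
          (by positivity)).trans ?_
        rw [exp_neg_mul_sq_confidence_div_two hδ0 (by linarith) hl']
        linarith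
    _ = P.real badᶜ := (probReal_compl_eq_one_sub bad.toFinite.measurableSet).symm
    _ ≤ _ := by
        refine measureReal_mono fun D hD f hf ↦ ?_
        have hgood : maxRiskDeviation _ σs F hF D < rademacher F hF D + ε := not_le.1 hD
        change risk _ σs f ≤ empRisk f D (fun i ↦ σs (D i)) + rademacher F hF D + ε
        linarith [risk_sub_empRisk_le_maxRiskDeviation (fun x ↦ μ.real {x}) σs hF D hf]
end

section
/- Let σ̂ ∈ Σ be any hypothesis with 𝐑_{F,D}(σ̂) = 0 (a 'true hypothesis' fit perfectly by the repertoire). Then the message length of σ̂ in the optimal code for the actual repertoire specified by the min-risk outputting 0 satisfies len(σ̂) := −log₂ p_𝔪(σ̂ | ε = 0) = V(F,D) + (|X| − l). -/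
open Classical Finset

/-- The min-risk: the minimum of the empirical risk over the repertoire `F`,
with labels produced by supervisor `σ`. -/
noncomputable def minRisk {X : Type*} {l : ℕ}
    (F : Finset (X → Bool)) (hF : F.Nonempty) (D : Fin l → X) (σ : X → Bool) : ℝ :=
  F.inf' hF (fun f => empRisk f D (fun i => σ (D i)))

/-- The actual repertoire specified by the min-risk outputting `ε`: the uniform
distribution on the preimage `𝐑_{F,D}⁻¹(ε)`. -/
noncomputable def actualRep {X : Type*} [Fintype X] {l : ℕ}
    (F : Finset (X → Bool)) (hF : F.Nonempty) (D : Fin l → X) (ε : ℝ)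
    (σ : X → Bool) : ℝ :=
  if minRisk F hF D σ = ε then
    1 / ((Finset.univ.filter (fun τ : X → Bool => minRisk F hF D τ = ε)).card : ℝ)
  else 0

/-!
A hypothesis `τ` has min-risk `0` exactly when the labeling `τ ∘ D` it induces on the data is
realized by some function of the repertoire. There are `2 ^ V(F, D)` such labelings, and each of
them is extended to all of `X` by choosing the values at the points outside the data freely. Hence
`𝐑_{F,D}⁻¹(0)` has `2 ^ V(F, D) * 2 ^ (|X| - |range D|)` elements, and the code length is the
logarithm of this number. Repetitions in the data matter only through `|range D|`.
-/

section Counting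

variable {ι X Y : Type*} [Fintype X] [DecidableEq X] [Fintype Y] [DecidableEq Y]

lemma card_filter_forall_mem_eq (s : Finset X) (σ : X → Y) :
    #{τ : X → Y | ∀ x ∈ s, τ x = σ x} = Fintype.card Y ^ (Fintype.card X - #s) := by
  have eq_piFinset : ({τ : X → Y | ∀ x ∈ s, τ x = σ x} : Finset (X → Y)) =
      Fintype.piFinset fun x => if x ∈ s then {σ x} else univ := by
    ext τ
    simp only [mem_filter_univ, Fintype.mem_piFinset]
    refine forall_congr' fun x => ?_
    split_ifs with hx <;> simp [hx]
  rw [eq_piFinset, Fintype.card_piFinset]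
  calc ∏ x, #(if x ∈ s then {σ x} else univ)
      = ∏ x, if x ∈ sᶜ then Fintype.card Y else 1 := by
        refine prod_congr rfl fun x _ => ?_
        by_cases hx : x ∈ s <;> simp [hx]
    _ = Fintype.card Y ^ #sᶜ := by rw [prod_ite_mem, univ_inter, prod_const]
    _ = Fintype.card Y ^ (Fintype.card X - #s) := by rw [card_compl]

variable [Fintype ι]

lemma card_filter_comp_eq_comp (D : ι → X) (σ : X → Y) :
    #{τ : X → Y | τ ∘ D = σ ∘ D} = Fintype.card Y ^ (Fintype.card X - #(univ.image D)) := by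
  rw [← card_filter_forall_mem_eq (univ.image D) σ]
  simp only [funext_iff, Function.comp_apply, forall_mem_image, mem_univ, forall_const]

lemma card_filter_comp_mem_image_comp (D : ι → X) (F : Finset (X → Y)) :
    #{τ : X → Y | τ ∘ D ∈ F.image (· ∘ D)} =
      #(F.image (· ∘ D)) * Fintype.card Y ^ (Fintype.card X - #(univ.image D)) := by
  have fiber_card : ∀ L ∈ F.image (· ∘ D),
      #{τ ∈ ({τ : X → Y | τ ∘ D ∈ F.image (· ∘ D)} : Finset (X → Y)) | τ ∘ D = L} =
        Fintype.card Y ^ (Fintype.card X - #(univ.image D)) := by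
    intro L hL
    obtain ⟨f, -, rfl⟩ := mem_image.1 hL
    rw [← card_filter_comp_eq_comp D f, filter_filter]
    exact congrArg card (filter_congr fun τ _ => and_iff_right_of_imp fun h => h ▸ hL)
  have maps_to : ∀ τ ∈ ({τ : X → Y | τ ∘ D ∈ F.image (· ∘ D)} : Finset (X → Y)),
      τ ∘ D ∈ F.image (· ∘ D) := fun τ hτ => (mem_filter_univ τ).1 hτ
  rw [card_eq_sum_card_fiberwise (f := (· ∘ D)) maps_to, sum_const_nat fiber_card]

end Counting

section Risk

variable {X : Type*} {l : ℕ}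

lemma empRisk_nonneg (f : X → Bool) (D : Fin l → X) (L : Fin l → Bool) : 0 ≤ empRisk f D L := by
  unfold empRisk
  positivity

lemma empRisk_eq_zero_iff (f : X → Bool) (D : Fin l → X) (L : Fin l → Bool) :
    empRisk f D L = 0 ↔ f ∘ D = L := by
  obtain rfl | hl := Nat.eq_zero_or_pos l
  · -- Here `1 / l` is the junk value `0`, but the sum is empty anyway.
    simp [empRisk, eq_iff_true_of_subsingleton]
  have scale_ne_zero : (1 / l : ℝ) ≠ 0 := by positivity
  rw [empRisk, mul_eq_zero_iff_left scale_ne_zero,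
    sum_eq_zero_iff_of_nonneg fun i _ => by positivity]
  simp [funext_iff]

lemma minRisk_eq_zero_iff (F : Finset (X → Bool)) (hF : F.Nonempty) (D : Fin l → X)
    (σ : X → Bool) : minRisk F hF D σ = 0 ↔ σ ∘ D ∈ F.image (· ∘ D) := by
  have minRisk_nonneg : 0 ≤ minRisk F hF D σ := le_inf' _ _ fun f _ => empRisk_nonneg f D _
  calc minRisk F hF D σ = 0
      ↔ ∃ f ∈ F, empRisk f D (σ ∘ D) ≤ 0 := by
        rw [← minRisk_nonneg.ge_iff_eq', minRisk, inf'_le_iff]; rfl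
    _ ↔ ∃ f ∈ F, f ∘ D = σ ∘ D := by
        simp only [(empRisk_nonneg _ _ _).ge_iff_eq', empRisk_eq_zero_iff]
    _ ↔ σ ∘ D ∈ F.image (· ∘ D) := mem_image.symm

lemma card_filter_minRisk_eq_zero [Fintype X] (F : Finset (X → Bool)) (hF : F.Nonempty)
    (D : Fin l → X) :
    #{τ : X → Bool | minRisk F hF D τ = 0} =
      #(F.image (· ∘ D)) * 2 ^ (Fintype.card X - #(univ.image D)) := by
  simp only [minRisk_eq_zero_iff]
  rw [card_filter_comp_mem_image_comp, Fintype.card_bool]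

theorem codeLength_true_hypothesis_general [Fintype X] (F : Finset (X → Bool)) (hF : F.Nonempty)
    (D : Fin l → X) (σhat : X → Bool) (hσ : minRisk F hF D σhat = 0) :
    -Real.logb 2 (actualRep F hF D 0 σhat) =
      vcEntropy F D + ((Fintype.card X : ℝ) - #(univ.image D)) := by
  have card_labelings_ne_zero : (#(F.image (· ∘ D)) : ℝ) ≠ 0 :=
    Nat.cast_ne_zero.2 (hF.image _).card_ne_zero
  calc -Real.logb 2 (actualRep F hF D 0 σhat)
      = Real.logb 2 #{τ : X → Bool | minRisk F hF D τ = 0} := by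
        rw [actualRep, if_pos hσ, one_div, Real.logb_inv, neg_neg]
    _ = Real.logb 2 (#(F.image (· ∘ D)) * 2 ^ (Fintype.card X - #(univ.image D))) := by
        rw [card_filter_minRisk_eq_zero, Nat.cast_mul, Nat.cast_pow, Nat.cast_ofNat]
    _ = Real.logb 2 #(F.image (· ∘ D)) + (Fintype.card X - #(univ.image D) : ℕ) := by
        rw [Real.logb_mul card_labelings_ne_zero (by positivity), Real.logb_pow,
          Real.logb_self_eq_one one_lt_two, mul_one]
    _ = vcEntropy F D + ((Fintype.card X : ℝ) - #(univ.image D)) := by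
        rw [Nat.cast_sub (card_le_univ _)]
        rfl

end Risk

/-- VC-entropy controls the code length of the true hypothesis: for any `σ̂`
fit perfectly by the repertoire, its message length in the optimal code for
the actual repertoire `p_𝔪(·|ε=0)` is `V(F,D) + (|X| - l)`. -/
theorem codeLength_true_hypothesis
    {X : Type*} [Fintype X] [Nonempty X] {l : ℕ} (hl : 1 ≤ l)
    (F : Finset (X → Bool)) (hF : F.Nonempty)
    (D : Fin l → X) (hD : Function.Injective D)
    (σhat : X → Bool) (hσ : minRisk F hF D σhat = 0) :
    -Real.logb 2 (actualRep F hF D 0 σhat)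
      = vcEntropy F D + ((Fintype.card X : ℝ) - (l : ℝ)) := by
  rw [codeLength_true_hypothesis_general F hF D σhat hσ, card_image_of_injective univ hD,
    card_univ, Fintype.card_fin]
end
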